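/- arXiv:math/9812093 — 6 statements merged into one kernel-verified Lean document; each statement's English description precedes it below -/
import Mathlib

section
/- Let 𝔞 be a Lie algebra over ℂ and let (π₁,v₁),…,(πₙ,vₙ) be finite-dimensional cyclic 𝔞-modules. If z₁,…,zₙ are pairwise distinct complex numbers, then the 𝔞[t]-module Π(Z) = π₁(z₁)⊗⋯⊗πₙ(zₙ) is cyclic, generated by v₁⊗⋯⊗vₙ: the only 𝔞[t]-submodule of Π(Z) containing v₁⊗⋯⊗vₙ is the whole of Π(Z). -/
open scoped TensorProduct
open PiTensorProduct

namespace Fusion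

variable {L : Type} {ι : Type} [Fintype ι] [DecidableEq ι]
variable (π : ι → Type) [∀ i, AddCommGroup (π i)] [∀ i, Module ℂ (π i)]

/-- Apply the endomorphism `g` in the `i`-th slot of the tensor product. -/
noncomputable def slotE (i : ι) (g : Module.End ℂ (π i)) :
    Module.End ℂ (⨂[ℂ] j, π j) :=
  PiTensorProduct.map (Function.update (fun j => (LinearMap.id : π j →ₗ[ℂ] π j)) i g)

variable (ρ : ∀ i, L → Module.End ℂ (π i))

/-- The action of `t^k ⊗ x` on the evaluation tensor product `Π(Z)`. -/
noncomputable def monAct (z : ι → ℂ) (k : ℕ) (x : L) :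
    Module.End ℂ (⨂[ℂ] j, π j) :=
  ∑ i, (z i) ^ k • slotE π i (ρ i x)

/-- The action of `p ⊗ x` on the evaluation tensor product `Π(Z)`. -/
noncomputable def polyAct (z : ι → ℂ) (p : Polynomial ℂ) (x : L) :
    Module.End ℂ (⨂[ℂ] j, π j) :=
  ∑ i, p.eval (z i) • slotE π i (ρ i x)

variable (v : ∀ i, π i)

/-- `IsWord π ρ v z u d` : `u` is obtained from `v₁ ⊗ ⋯ ⊗ vₙ` by applying a monomial
`(t^{k₁}⊗x₁)⋯(t^{k_m}⊗x_m)` of total degree `d = k₁ + ⋯ + k_m` in `Π(Z)`. -/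
inductive IsWord (z : ι → ℂ) : (⨂[ℂ] j, π j) → ℕ → Prop
  | base : IsWord z (tprod ℂ v) 0
  | step (x : L) (k : ℕ) {u : ⨂[ℂ] j, π j} {d : ℕ} :
      IsWord z u d → IsWord z (monAct π ρ z k x u) (d + k)

/-- The filtration `Fⁱ_Z` on the tensor product. -/
noncomputable def F (z : ι → ℂ) (i : ℕ) : Submodule ℂ (⨂[ℂ] j, π j) :=
  Submodule.span ℂ {u | ∃ d ≤ i, IsWord π ρ v z u d}

lemma F_mono (z : ι → ℂ) {i j : ℕ} (h : i ≤ j) : F π ρ v z i ≤ F π ρ v z j :=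
  Submodule.span_mono (fun u ⟨d, hd, hw⟩ => ⟨d, hd.trans h, hw⟩)

lemma monAct_mem_F {z : ι → ℂ} (k : ℕ) (x : L) {i : ℕ} {u : ⨂[ℂ] j, π j}
    (hu : u ∈ F π ρ v z i) : monAct π ρ z k x u ∈ F π ρ v z (i + k) := by
  have : Submodule.map (monAct π ρ z k x) (F π ρ v z i) ≤ F π ρ v z (i + k) := by
    rw [F, Submodule.map_span]
    refine Submodule.span_le.2 ?_
    rintro _ ⟨u, ⟨d, hd, hw⟩, rfl⟩
    exact Submodule.subset_span ⟨d + k, by omega, hw.step x k⟩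
  exact this ⟨u, hu, rfl⟩

/-- `Fprev π ρ v z i` is `F^{i-1}`, with `F^{-1} = 0`. -/
noncomputable def Fprev (z : ι → ℂ) : ℕ → Submodule ℂ (⨂[ℂ] j, π j)
  | 0 => ⊥
  | (i + 1) => F π ρ v z i

lemma monAct_mem_Fprev {z : ι → ℂ} (k : ℕ) (x : L) {i : ℕ} {u : ⨂[ℂ] j, π j}
    (hu : u ∈ Fprev π ρ v z i) : monAct π ρ z k x u ∈ Fprev π ρ v z (i + k) := by
  cases i with
  | zero =>
      rw [Fprev, Submodule.mem_bot] at hu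
      subst hu
      simpa using (Fprev π ρ v z (0 + k)).zero_mem
  | succ i =>
      have : monAct π ρ z k x u ∈ F π ρ v z (i + k) := monAct_mem_F π ρ v k x hu
      have he : Fprev π ρ v z (i + 1 + k) = F π ρ v z (i + k) := by
        rw [show i + 1 + k = (i + k) + 1 by omega]; rfl
      rwa [he]

/-- The `i`-th graded piece `grⁱ_Z = Fⁱ_Z / F^{i-1}_Z` of the fusion product. -/
noncomputable abbrev gr (z : ι → ℂ) (i : ℕ) : Type :=
  ↥(F π ρ v z i) ⧸ (Fprev π ρ v z i).comap (F π ρ v z i).subtype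

/-- The map `grⁱ_Z → gr^{i+k}_Z` induced by the action of `t^k ⊗ x`. -/
noncomputable def grMap (z : ι → ℂ) (k : ℕ) (x : L) (i : ℕ) :
    gr π ρ v z i →ₗ[ℂ] gr π ρ v z (i + k) :=
  Submodule.mapQ _ _
    ((monAct π ρ z k x).restrict (fun u hu => monAct_mem_F π ρ v k x hu))
    (fun u hu => monAct_mem_Fprev π ρ v k x hu)

/-- The class of `v₁ ⊗ ⋯ ⊗ vₙ` in `gr⁰_Z`. -/
noncomputable def vbar (z : ι → ℂ) : gr π ρ v z 0 :=
  Submodule.Quotient.mk ⟨tprod ℂ v, Submodule.subset_span ⟨0, le_refl 0, IsWord.base⟩⟩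

end Fusion

/-! Evaluating at the Lagrange polynomial `ℓᵢ`, with `ℓᵢ(zⱼ) = δᵢⱼ`, turns the action of `ℓᵢ ⊗ x`
into the action of `x` on the `i`-th tensor factor alone. A submodule stable under `𝔞[t]` is thus
stable under each factor separately, so the generators `vᵢ` can be replaced by arbitrary vectors
one factor at a time. -/

namespace Fusion

/-- `v` is a cyclic vector for the family of operators `ρ`: the only submodule that contains `v`
and is stable under every `ρ x` is the whole module. The index type `L` carries no structure,
so that the notion applies both to the action of a Lie algebra and to that of the pure tensors
`p ⊗ x` spanning a current algebra. -/
def IsCyclicVector {R L M : Type*} [Semiring R] [AddCommMonoid M] [Module R M]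
    (ρ : L → Module.End R M) (v : M) : Prop :=
  ∀ N : Submodule R M, (∀ x, ∀ u ∈ N, ρ x u ∈ N) → v ∈ N → N = ⊤

theorem isCyclicVector_toEnd_of_lieSubmodule {R L M : Type*} [CommRing R] [LieRing L]
    [LieAlgebra R L] [AddCommGroup M] [Module R M] [LieRingModule L M] [LieModule R L M] {v : M}
    (hv : ∀ N : LieSubmodule R L M, v ∈ N → N = ⊤) : IsCyclicVector (LieModule.toEnd R L M) v :=
  fun N hN hvN ↦ LieSubmodule.mk_eq_top_iff.mp (hv ⟨N, hN _ _⟩ hvN)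

section Slot

variable {R ι : Type*} [CommSemiring R] [DecidableEq ι]
variable {M : ι → Type*} [∀ i, AddCommMonoid (M i)] [∀ i, Module R (M i)]

/-- The endomorphism of `⨂ j, M j` acting by `g` on the `i`-th factor and by the identity on the
others: `slotE` over an arbitrary commutative semiring. -/
noncomputable def mapSlot (i : ι) (g : Module.End R (M i)) : Module.End R (⨂[R] j, M j) :=
  PiTensorProduct.map (Function.update (fun _ ↦ LinearMap.id) i g)

theorem mapSlot_tprod (i : ι) (g : Module.End R (M i)) (w : ∀ j, M j) :
    mapSlot i g (tprod R w) = tprod R (Function.update w i (g (w i))) := by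
  rw [mapSlot, map_tprod]
  congr 1
  ext j
  obtain rfl | hj := eq_or_ne j i
  · simp
  · simp [hj]

theorem mapSlot_tprod_update (i : ι) (g : Module.End R (M i)) (w : ∀ j, M j) (y : M i) :
    mapSlot i g (tprod R (Function.update w i y)) = tprod R (Function.update w i (g y)) := by
  rw [mapSlot_tprod, Function.update_self, Function.update_idem]

theorem IsCyclicVector.tprod_update_mem {L : Type*} {i : ι} {ρ : L → Module.End R (M i)}
    {w : ∀ j, M j} (hw : IsCyclicVector ρ (w i)) {P : Submodule R (⨂[R] j, M j)}
    (hP : ∀ x, ∀ u ∈ P, mapSlot i (ρ x) u ∈ P) (hwP : tprod R w ∈ P) (y : M i) :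
    tprod R (Function.update w i y) ∈ P := by
  let N : Submodule R (M i) := P.comap (MultilinearMap.toLinearMap (PiTensorProduct.tprod R) w i)
  have hN : ∀ x, ∀ u ∈ N, ρ x u ∈ N := by
    intro x u hu
    change tprod R (Function.update w i (ρ x u)) ∈ P
    rw [← mapSlot_tprod_update]
    exact hP x _ hu
  have hwN : w i ∈ N := by simpa [N] using hwP
  have hy : y ∈ N := hw N hN hwN ▸ Submodule.mem_top
  exact hy

theorem IsCyclicVector.tprod_mapSlot [Finite ι] {L : ι → Type*}
    {ρ : ∀ i, L i → Module.End R (M i)} {v : ∀ i, M i} (hv : ∀ i, IsCyclicVector (ρ i) (v i)) :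
    IsCyclicVector (fun q : Σ i, L i ↦ mapSlot q.1 (ρ q.1 q.2)) (tprod R v) := by
  intro P hP hvP
  have piecewise_mem (w : ∀ i, M i) (s : Finset ι) : tprod R (s.piecewise w v) ∈ P := by
    induction s using Finset.induction_on with
    | empty => simpa using hvP
    | insert i s hi ih =>
      rw [Finset.piecewise_insert]
      refine IsCyclicVector.tprod_update_mem (ρ := ρ i) ?_ (fun x ↦ hP ⟨i, x⟩) ih (w i)
      rw [Finset.piecewise_eq_of_notMem _ _ _ hi]
      exact hv i
  have := Fintype.ofFinite ι
  rw [eq_top_iff, ← span_tprod_eq_top, Submodule.span_le, Set.range_subset_iff]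
  intro w
  simpa using piecewise_mem w Finset.univ

end Slot

section Evaluation

variable {L ι : Type*} [Fintype ι] [DecidableEq ι] {M : ι → Type*} [∀ i, AddCommMonoid (M i)]

/-- The action of `p ⊗ x` on the tensor product of the evaluation modules `M i` at the points
`z i`: `polyAct` over an arbitrary commutative semiring. -/
noncomputable def evalAct {R : Type*} [CommSemiring R] [∀ i, Module R (M i)]
    (ρ : ∀ i, L → Module.End R (M i)) (z : ι → R) (p : Polynomial R) (x : L) :
    Module.End R (⨂[R] j, M j) :=
  ∑ i, p.eval (z i) • mapSlot i (ρ i x)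

theorem evalAct_lagrangeBasis {K : Type*} [Field K] [∀ i, Module K (M i)]
    (ρ : ∀ i, L → Module.End K (M i)) {z : ι → K} (hz : Function.Injective z) (i : ι) (x : L) :
    evalAct ρ z (Lagrange.basis Finset.univ z i) x = mapSlot i (ρ i x) := by
  rw [evalAct, Finset.sum_eq_single_of_mem i (Finset.mem_univ i),
    Lagrange.eval_basis_self hz.injOn (Finset.mem_univ i), one_smul]
  intro j _ hj
  rw [Lagrange.eval_basis_of_ne hj.symm (Finset.mem_univ j), zero_smul]

end Evaluation

end Fusion

open Fusion in
theorem evaluation_tensor_product_cyclic_general {K L ι : Type*} [Field K] [Fintype ι]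
    [DecidableEq ι] {M : ι → Type*} [∀ i, AddCommMonoid (M i)] [∀ i, Module K (M i)]
    {ρ : ∀ i, L → Module.End K (M i)} {v : ∀ i, M i} (hv : ∀ i, IsCyclicVector (ρ i) (v i))
    {z : ι → K} (hz : Function.Injective z) :
    IsCyclicVector (fun q : Polynomial K × L ↦ evalAct ρ z q.1 q.2) (tprod K v) := by
  intro P hP hvP
  refine IsCyclicVector.tprod_mapSlot hv P ?_ hvP
  rintro ⟨i, x⟩ u hu
  simpa only [evalAct_lagrangeBasis ρ hz] using hP (Lagrange.basis Finset.univ z i, x) u hu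

open Fusion in
/-- For finite-dimensional cyclic `𝔞`-modules and pairwise distinct points,
the evaluation tensor product `Π(Z)` is a cyclic `𝔞[t]`-module generated by `v₁ ⊗ ⋯ ⊗ vₙ`. -/
theorem evaluation_tensor_product_cyclic
    {L : Type} [LieRing L] [LieAlgebra ℂ L]
    (n : ℕ) (π : Fin n → Type) [∀ i, AddCommGroup (π i)] [∀ i, Module ℂ (π i)]
    [∀ i, LieRingModule L (π i)] [∀ i, LieModule ℂ L (π i)]
    [∀ i, FiniteDimensional ℂ (π i)]
    (v : ∀ i, π i)
    (hcyc : ∀ i, ∀ N : LieSubmodule ℂ L (π i), v i ∈ N → N = ⊤)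
    (z : Fin n → ℂ) (hz : Function.Injective z)
    (P : Submodule ℂ (⨂[ℂ] i, π i))
    (hP : ∀ (p : Polynomial ℂ) (x : L) (u : ⨂[ℂ] i, π i), u ∈ P →
      polyAct π (fun i x => LieModule.toEnd ℂ L (π i) x) z p x u ∈ P)
    (hvP : tprod ℂ v ∈ P) :
    P = ⊤ :=
  evaluation_tensor_product_cyclic_general (fun i ↦ isCyclicVector_toEnd_of_lieSubmodule (hcyc i))
    hz P (fun q u hu ↦ hP q.1 q.2 u hu) hvP
end

section
/- Let 𝔞 be a Lie algebra over ℂ and let (M₁,v₁),…,(Mₙ,vₙ) be graded cyclic 𝔞[t]-modules. If z₁,…,zₙ are pairwise distinct complex numbers, then the 𝔞[t]-module M₁(z₁)⊗⋯⊗Mₙ(zₙ) — the space M₁⊗⋯⊗Mₙ with (p⊗x)·(u₁⊗⋯⊗uₙ) = Σᵢ u₁⊗⋯⊗((p⊗x)·uᵢ taken in Mᵢ(zᵢ))⊗⋯⊗uₙ — is cyclic, generated by v₁⊗⋯⊗vₙ. -/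
/-!
Grading and finite dimension force `t ^ k ⊗ x` to act by zero on every `Mᵢ` once `k ≥ N`, so
`p ⊗ x` acts on `Mᵢ(zᵢ)` through the Taylor expansion of `p` at `zᵢ` modulo `(t - zᵢ) ^ N`. As the
`zᵢ` are distinct, Hermite interpolation provides a `p` congruent to `(t - zᵢ) ^ r` at `zᵢ` and to
`0` at all other `zⱼ`: then `p ⊗ x` acts on the tensor product as `t ^ r ⊗ x` in the `i`-th slot
alone. A submodule containing `v₁ ⊗ ⋯ ⊗ vₙ` is therefore stable under each slot separately, and the
factors `vᵢ` can be replaced by arbitrary vectors one at a time.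
-/

open scoped TensorProduct
open PiTensorProduct

namespace FusionG

open PiTensorProduct
open scoped TensorProduct

variable {L : Type} {ι : Type} [Fintype ι] [DecidableEq ι]
variable (M : ι → Type) [∀ i, AddCommGroup (M i)] [∀ i, Module ℂ (M i)]
variable (A : ∀ i, ℕ → L → Module.End ℂ (M i))

/-- If `t^k ⊗ x` acts on the graded module `Mᵢ` via `A i k x`, then on the shifted module
`Mᵢ(z)` it acts via `((t+z)^k ⊗ x) = ∑_r C(k,r) z^{k-r} (t^r ⊗ x)`. -/
noncomputable def shiftAct (i : ι) (z : ℂ) (k : ℕ) (x : L) : Module.End ℂ (M i) :=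
  ∑ r ∈ Finset.range (k + 1), ((k.choose r : ℂ) * z ^ (k - r)) • A i r x

/-- The action of `t^k ⊗ x` on the tensor product `M₁(z₁) ⊗ ⋯ ⊗ Mₙ(zₙ)` of shifted graded
modules. -/
noncomputable def monAct (z : ι → ℂ) (k : ℕ) (x : L) :
    Module.End ℂ (⨂[ℂ] j, M j) :=
  ∑ i, Fusion.slotE M i (shiftAct M A i (z i) k x)

variable (v : ∀ i, M i)

/-- Words in the monomial operators applied to `v₁ ⊗ ⋯ ⊗ vₙ`, together with their total
`t`-degree. -/
inductive IsWord (z : ι → ℂ) : (⨂[ℂ] j, M j) → ℕ → Prop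
  | base : IsWord z (tprod ℂ v) 0
  | step (x : L) (k : ℕ) {u : ⨂[ℂ] j, M j} {d : ℕ} :
      IsWord z u d → IsWord z (monAct M A z k x u) (d + k)

/-- The filtration on the tensor product of shifted graded modules. -/
noncomputable def F (z : ι → ℂ) (i : ℕ) : Submodule ℂ (⨂[ℂ] j, M j) :=
  Submodule.span ℂ {u | ∃ d ≤ i, IsWord M A v z u d}

lemma monAct_mem_F {z : ι → ℂ} (k : ℕ) (x : L) {i : ℕ} {u : ⨂[ℂ] j, M j}
    (hu : u ∈ F M A v z i) : monAct M A z k x u ∈ F M A v z (i + k) := by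
  have h : Submodule.map (monAct M A z k x) (F M A v z i) ≤ F M A v z (i + k) := by
    rw [F, Submodule.map_span]
    refine Submodule.span_le.2 ?_
    rintro _ ⟨u, ⟨d, hd, hw⟩, rfl⟩
    exact Submodule.subset_span ⟨d + k, by omega, hw.step x k⟩
  exact h ⟨u, hu, rfl⟩

/-- `Fprev M A v z i` is `F^{i-1}`, with `F^{-1} = 0`. -/
noncomputable def Fprev (z : ι → ℂ) : ℕ → Submodule ℂ (⨂[ℂ] j, M j)
  | 0 => ⊥
  | (i + 1) => F M A v z i

lemma monAct_mem_Fprev {z : ι → ℂ} (k : ℕ) (x : L) {i : ℕ} {u : ⨂[ℂ] j, M j}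
    (hu : u ∈ Fprev M A v z i) : monAct M A z k x u ∈ Fprev M A v z (i + k) := by
  cases i with
  | zero =>
      rw [Fprev, Submodule.mem_bot] at hu
      subst hu
      simpa using (Fprev M A v z (0 + k)).zero_mem
  | succ i =>
      have h : monAct M A z k x u ∈ F M A v z (i + k) := monAct_mem_F M A v k x hu
      have he : Fprev M A v z (i + 1 + k) = F M A v z (i + k) := by
        rw [show i + 1 + k = (i + k) + 1 by omega]; rfl
      rwa [he]

/-- The graded pieces of the fusion product of graded modules. -/
noncomputable abbrev gr (z : ι → ℂ) (i : ℕ) : Type :=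
  ↥(F M A v z i) ⧸ (Fprev M A v z i).comap (F M A v z i).subtype

/-- The map `grⁱ → gr^{i+k}` induced by `t^k ⊗ x`. -/
noncomputable def grMap (z : ι → ℂ) (k : ℕ) (x : L) (i : ℕ) :
    gr M A v z i →ₗ[ℂ] gr M A v z (i + k) :=
  Submodule.mapQ _ _
    ((monAct M A z k x).restrict (fun u hu => monAct_mem_F M A v k x hu))
    (fun u hu => monAct_mem_Fprev M A v k x hu)

/-- The class of `v₁ ⊗ ⋯ ⊗ vₙ` in `gr⁰`. -/
noncomputable def vbar (z : ι → ℂ) : gr M A v z 0 :=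
  Submodule.Quotient.mk ⟨tprod ℂ v, Submodule.subset_span ⟨0, le_refl 0, IsWord.base⟩⟩

end FusionG

open Polynomial Filter

theorem exists_forall_X_pow_dvd_taylor_sub {R ι : Type*} [CommRing R] [Finite ι]
    {z : ι → R} (hz : Pairwise fun i j => IsUnit (z i - z j)) (N : ℕ) (f : ι → R[X]) :
    ∃ p : R[X], ∀ i, X ^ N ∣ taylor (z i) p - f i := by
  have hcoprime : Pairwise fun i j =>
      IsCoprime (Ideal.span {(X - C (z i)) ^ N}) (Ideal.span {(X - C (z j)) ^ N}) :=
    fun i j hij => (Ideal.isCoprime_span_singleton_iff _ _).2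
      (isCoprime_X_sub_C_of_isUnit_sub (hz hij)).pow
  obtain ⟨p, hp⟩ := Ideal.exists_forall_sub_mem_ideal hcoprime fun i => taylor (-z i) (f i)
  refine ⟨p, fun i => ?_⟩
  simpa [taylor_taylor] using
    map_dvd (taylorAlgHom (z i)) (Ideal.mem_span_singleton.1 (hp i))

section Umbral

variable {R E F : Type*} [CommSemiring R] [AddCommMonoid E] [Module R E]
  [AddCommMonoid F] [Module R F]

/-- The umbral evaluation at a sequence `a`: the linear map sending `X ^ k` to `a k`. When `a k` is
the action of `t ^ k ⊗ x`, it sends `p` to the action of `p ⊗ x`. -/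
noncomputable def umbralEval (a : ℕ → E) : R[X] →ₗ[R] E :=
  lsum fun k => LinearMap.toSpanSingleton R E (a k)

lemma umbralEval_apply (a : ℕ → E) (p : R[X]) : umbralEval a p = p.sum fun k c => c • a k :=
  rfl

lemma umbralEval_X_pow (a : ℕ → E) (k : ℕ) : umbralEval a (X ^ k : R[X]) = a k := by
  rw [umbralEval_apply, ← monomial_one_right_eq_X_pow, sum_monomial_index _ _ (zero_smul R _),
    one_smul]

lemma umbralEval_eq_zero_of_X_pow_dvd {a : ℕ → E} {N : ℕ} (ha : ∀ k ≥ N, a k = 0) {p : R[X]}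
    (hp : X ^ N ∣ p) : umbralEval a p = 0 := by
  rw [umbralEval_apply]
  refine Finset.sum_eq_zero fun k _ => ?_
  obtain hk | hk := lt_or_ge k N
  · simp only [X_pow_dvd_iff.1 hp k hk, zero_smul]
  · simp only [ha k hk, smul_zero]

/-- The binomial transform of a sequence `a` with parameter `c`. When `a k` is the action of
`t ^ k ⊗ x` on a module, this is its action on the module shifted by `c`. -/
def binomialShift (c : R) (a : ℕ → E) (k : ℕ) : E :=
  ∑ r ∈ Finset.range (k + 1), ((k.choose r : R) * c ^ (k - r)) • a r

lemma map_binomialShift (g : E →ₗ[R] F) (c : R) (a : ℕ → E) (k : ℕ) :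
    g (binomialShift c a k) = binomialShift c (fun r => g (a r)) k := by
  simp only [binomialShift, map_sum, map_smul]

lemma umbralEval_taylor_X_pow (c : R) (a : ℕ → E) (k : ℕ) :
    umbralEval a (taylor c (X ^ k)) = binomialShift c a k := by
  have hdeg : ((X + C c) ^ k).natDegree < k + 1 := Nat.lt_succ_of_le <| by
    simpa using natDegree_pow_le_of_le k (natDegree_add_C.trans_le natDegree_X_le)
  rw [taylor_X_pow, umbralEval_apply, sum_over_range' _ (fun r => zero_smul R (a r)) _ hdeg]
  simp only [coeff_X_add_C_pow, binomialShift, mul_comm]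

lemma sum_umbralEval_taylor_mem_span {ι : Type*} [Fintype ι] (z : ι → R) (b : ι → ℕ → E)
    (p : R[X]) :
    ∑ j, umbralEval (b j) (taylor (z j) p) ∈
      Submodule.span R (Set.range fun k => ∑ j, binomialShift (z j) (b j) k) := by
  induction p using Polynomial.induction_on' with
  | add p q hp hq =>
    simp only [map_add, Finset.sum_add_distrib]
    exact add_mem hp hq
  | monomial k c =>
    simp only [← smul_X_eq_monomial, map_smul, umbralEval_taylor_X_pow, ← Finset.smul_sum]
    exact Submodule.smul_mem _ c (Submodule.subset_span ⟨k, rfl⟩)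

end Umbral

theorem mem_span_range_sum_binomialShift {R E ι : Type*} [CommRing R] [AddCommGroup E]
    [Module R E] [Fintype ι] {z : ι → R} (hz : Pairwise fun i j => IsUnit (z i - z j))
    {b : ι → ℕ → E} (hb : ∀ j, ∀ᶠ k in atTop, b j k = 0) (i : ι) (r : ℕ) :
    b i r ∈ Submodule.span R (Set.range fun k => ∑ j, binomialShift (z j) (b j) k) := by
  classical
  obtain ⟨N, hN⟩ := eventually_atTop.1 (eventually_all.2 hb)
  obtain ⟨p, hp⟩ := exists_forall_X_pow_dvd_taylor_sub hz N (Pi.single i (X ^ r) : ι → R[X])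
  have heval (j : ι) : umbralEval (b j) (taylor (z j) p) =
      umbralEval (b j) (Pi.single (M := fun _ => R[X]) i (X ^ r) j) := by
    rw [← sub_eq_zero, ← map_sub]
    exact umbralEval_eq_zero_of_X_pow_dvd (fun k hk => hN k hk j) (hp j)
  have hsum : ∑ j, umbralEval (b j) (taylor (z j) p) = b i r := by
    rw [Fintype.sum_eq_single i fun j hj => by rw [heval, Pi.single_eq_of_ne hj, map_zero],
      heval, Pi.single_eq_same, umbralEval_X_pow]
  exact hsum ▸ sum_umbralEval_taylor_mem_span z b p

section Cyclic

variable {R V κ : Type*} [CommSemiring R] [AddCommMonoid V] [Module R V]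

/-- `v` is a cyclic vector for a family `a` of endomorphisms: the only submodule stable under the
family and containing `v` is the whole module. -/
def IsCyclicVector (a : κ → Module.End R V) (v : V) : Prop :=
  ∀ P : Submodule R V, (∀ k, ∀ u ∈ P, a k u ∈ P) → v ∈ P → P = ⊤

lemma IsCyclicVector.of_forall_mem_span {τ : Type*} {a : κ → Module.End R V}
    {b : τ → Module.End R V} {v : V} (hb : IsCyclicVector b v)
    (hba : ∀ k, b k ∈ Submodule.span R (Set.range a)) : IsCyclicVector a v := by
  refine fun P hP => hb P fun k u hu => ?_
  have hspan : Submodule.span R (Set.range a) ≤ P.comap (LinearMap.applyₗ u) :=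
    Submodule.span_le.2 (Set.range_subset_iff.2 fun l => hP l u hu)
  exact hspan (hba k)

end Cyclic

lemma eventually_eq_zero_of_graded {R V : Type*} [Ring R] [AddCommGroup V] [Module R V]
    [IsNoetherian R V] {G : ℕ → Submodule R V} (hG : DirectSum.IsInternal G)
    {a : ℕ → Module.End R V}
    (ha : ∀ k j, ∀ u ∈ G j, a k u ∈ G (j + k)) : ∀ᶠ k in atTop, a k = 0 := by
  obtain ⟨N, hN⟩ := (Submodule.finite_ne_bot_of_iSupIndep hG.submodule_iSupIndep).bddAbove
  filter_upwards [eventually_gt_atTop N] with k hk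
  have hker : ⨆ j, G j ≤ LinearMap.ker (a k) := iSup_le fun j u hu => by
    have hbot : G (j + k) = ⊥ := by
      by_contra hne
      exact absurd (hN hne) (by lia)
    simpa [hbot] using ha k j u hu
  rwa [hG.submodule_iSup_eq_top, top_le_iff, LinearMap.ker_eq_top] at hker

section TensorProduct

variable {R ι : Type*} [CommSemiring R] [DecidableEq ι]
  {M : ι → Type*} [∀ i, AddCommMonoid (M i)] [∀ i, Module R (M i)]

/-- `Fusion.slotE` over an arbitrary commutative semiring, bundled as a linear map in the
endomorphism applied in the `i`-th slot. -/
noncomputable def slotMap (i : ι) : Module.End R (M i) →ₗ[R] Module.End R (⨂[R] j, M j) :=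
  (mapMultilinear R M M).toLinearMap (fun _ => LinearMap.id) i

lemma slotMap_tprod (i : ι) (g : Module.End R (M i)) (u : ∀ j, M j) :
    slotMap i g (tprod R u) = tprod R (Function.update u i (g (u i))) := by
  change map (Function.update (fun _ => LinearMap.id) i g) (tprod R u) = _
  rw [map_tprod]
  congr 1
  ext j
  obtain rfl | hj := eq_or_ne j i
  · simp
  · simp [hj]

theorem isCyclicVector_tprod [Finite ι] {κ : ι → Type*} {a : ∀ i, κ i → Module.End R (M i)}
    {v : ∀ i, M i} (hv : ∀ i, IsCyclicVector (a i) (v i)) :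
    IsCyclicVector (fun k : Σ i, κ i => slotMap k.1 (a k.1 k.2)) (tprod R v) := by
  cases nonempty_fintype ι
  intro P hP hvP
  have htprod (s : Finset ι) : ∀ u : ∀ i, M i, (∀ i ∉ s, u i = v i) → tprod R u ∈ P := by
    induction s using Finset.induction_on with
    | empty => exact fun u hu => (funext fun i => hu i (Finset.notMem_empty i) : u = v) ▸ hvP
    | insert i s _ ih =>
      intro u hu
      have htop : P.comap ((PiTensorProduct.tprod R).toLinearMap u i) = ⊤ := by
        refine hv i _ (fun k m hm => ?_) (ih _ fun j hj => ?_)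
        · simpa [slotMap_tprod] using hP ⟨i, k⟩ _ hm
        · obtain rfl | hji := eq_or_ne j i
          · simp
          · simpa [hji] using hu j (by simp [hji, hj])
      simpa using htop.ge (Submodule.mem_top (x := u i))
  rw [eq_top_iff, ← span_tprod_eq_top, Submodule.span_le, Set.range_subset_iff]
  exact fun u => htprod Finset.univ u fun i hi => absurd (Finset.mem_univ i) hi

end TensorProduct

theorem shifted_graded_tensor_product_cyclic_general {R L ι : Type*} [CommRing R] [Fintype ι]
    [DecidableEq ι] {M : ι → Type*} [∀ i, AddCommGroup (M i)] [∀ i, Module R (M i)]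
    {A : ∀ i, ℕ → L → Module.End R (M i)} (hA : ∀ i x, ∀ᶠ k in atTop, A i k x = 0)
    {v : ∀ i, M i} (hv : ∀ i, IsCyclicVector (fun k : ℕ × L => A i k.1 k.2) (v i))
    {z : ι → R} (hz : Pairwise fun i j => IsUnit (z i - z j)) :
    IsCyclicVector
      (fun k : ℕ × L => ∑ i, slotMap i (binomialShift (z i) (fun r => A i r k.2) k.1))
      (tprod R v) := by
  refine (isCyclicVector_tprod hv).of_forall_mem_span fun ⟨i, r, x⟩ => ?_
  have hslot (j : ι) : ∀ᶠ k in atTop, slotMap j (A j k x) = 0 :=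
    (hA j x).mono fun k hk => by rw [hk, map_zero]
  refine Submodule.span_mono ?_ (mem_span_range_sum_binomialShift hz hslot i r)
  rintro _ ⟨k, rfl⟩
  exact ⟨(k, x), by simp only [map_binomialShift]⟩

open PiTensorProduct in
open scoped TensorProduct in
/-- For graded cyclic `𝔞[t]`-modules `(M₁,v₁), …, (Mₙ,vₙ)` and pairwise
distinct points `z₁, …, zₙ`, the tensor product `M₁(z₁) ⊗ ⋯ ⊗ Mₙ(zₙ)` of the shifted modules
is a cyclic `𝔞[t]`-module generated by `v₁ ⊗ ⋯ ⊗ vₙ`. -/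
theorem shifted_graded_tensor_product_cyclic
    {L : Type} [LieRing L] [LieAlgebra ℂ L]
    (n : ℕ) (M : Fin n → Type) [∀ i, AddCommGroup (M i)] [∀ i, Module ℂ (M i)]
    [∀ i, FiniteDimensional ℂ (M i)]
    (A : ∀ i, ℕ → L → Module.End ℂ (M i))
    (hadd : ∀ i k x y, A i k (x + y) = A i k x + A i k y)
    (hsmul : ∀ i k (c : ℂ) x, A i k (c • x) = c • A i k x)
    (hbracket : ∀ i k l x y,
      A i k x * A i l y - A i l y * A i k x = A i (k + l) ⁅x, y⁆)
    (Mgr : ∀ i, ℕ → Submodule ℂ (M i))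
    (hinternal : ∀ i, DirectSum.IsInternal (Mgr i))
    (hgraded : ∀ i (k : ℕ) (x : L) (j : ℕ), ∀ u ∈ Mgr i j, A i k x u ∈ Mgr i (j + k))
    (v : ∀ i, M i)
    (hcyc : ∀ i, ∀ P : Submodule ℂ (M i),
      (∀ (k : ℕ) (x : L), ∀ u ∈ P, A i k x u ∈ P) → v i ∈ P → P = ⊤)
    (z : Fin n → ℂ) (hz : Function.Injective z)
    (P : Submodule ℂ (⨂[ℂ] i, M i))
    (hP : ∀ (k : ℕ) (x : L) (u : ⨂[ℂ] i, M i), u ∈ P → FusionG.monAct M A z k x u ∈ P)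
    (hvP : tprod ℂ v ∈ P) :
    P = ⊤ := by
  exact shifted_graded_tensor_product_cyclic_general
    (fun i x => eventually_eq_zero_of_graded (hinternal i) fun k => hgraded i k x)
    (fun i Q hQ => hcyc i Q fun k x => hQ (k, x))
    (fun _ _ hij => (sub_ne_zero.2 (hz.ne hij)).isUnit) P (fun k => hP k.1 k.2) hvP
end

section
/- Let z₁,…,zₙ be pairwise distinct complex numbers and N ≥ 1 an integer. Consider the nN × nN complex matrix A whose rows are indexed by k ∈ {1,…,nN} and whose columns are indexed by pairs (i,r) with 1 ≤ i ≤ n and 1 ≤ r ≤ N, with entry A_{k,(i,r)} = C(k,r)·zᵢ^{k−r} when k ≥ r (where C(k,r) is the binomial coefficient) and A_{k,(i,r)} = 0 when k < r. Then A is invertible. -/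
/-!
If `P` is the polynomial of degree less than the number of rows with coefficient vector `v`, then
`v ᵥ* V`, for the standard confluent Vandermonde matrix `V` with entries `C(k, r) zᵢ^(k - r)`, lists
the leading Taylor coefficients of `P` at the nodes. If they all vanish, then `P` is divisible by
`∏ (X - zᵢ)^(mᵢ)`, which forces `P = 0` when this product has larger degree.

The matrix of the theorem has both binomial indices raised by one, and the identity
`(r + 1) C(k + 1, r + 1) = (k + 1) C(k, r)` shows that it differs from `V` only by invertible
diagonal scalings of its rows and columns.
-/

open Polynomial Matrix Function
open scoped Nat

section CommRing

variable {R ι : Type*} [CommRing R]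

theorem eq_zero_of_forall_X_sub_C_pow_dvd [Fintype ι] {z : ι → R}
    (hz : Pairwise fun i j => IsUnit (z i - z j)) {m : ι → ℕ} {P : R[X]}
    (hdvd : ∀ i, (X - C (z i)) ^ m i ∣ P) (hdeg : P.degree < (∑ i, m i : ℕ)) : P = 0 := by
  nontriviality R
  have hmonic : ∀ i ∈ Finset.univ, ((X - C (z i)) ^ m i).Monic :=
    fun i _ => (monic_X_sub_C (z i)).pow (m i)
  have hcoprime : Pairwise (IsCoprime on fun i => (X - C (z i)) ^ m i) :=
    fun _ _ hij => (isCoprime_X_sub_C_of_isUnit_sub (hz hij)).pow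
  have hprod : ∏ i, (X - C (z i)) ^ m i ∣ P := Fintype.prod_dvd_of_coprime hcoprime hdvd
  have hprod_degree : (∏ i, (X - C (z i)) ^ m i).degree = ((∑ i, m i : ℕ) : WithBot ℕ) := by
    simp [degree_prod_of_monic _ _ hmonic, degree_pow']
  by_contra hP
  exact (monic_prod_of_monic _ _ hmonic).not_dvd_of_degree_lt hP (hprod_degree ▸ hdeg) hprod

/-- The (possibly rectangular) confluent Vandermonde matrix with `n` rows and with nodes `z i` of
multiplicity `m i`: the entries of row `k` are the coefficients of `t ^ r`, for `r < m i`, in the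
expansions of `(t + z i) ^ k`. The truncated exponent `k - r` is harmless, since `k.choose r = 0`
for `k < r`. -/
def confluentVandermonde (z : ι → R) (m : ι → ℕ) (n : ℕ) : Matrix (Fin n) (Σ i, Fin (m i)) R :=
  of fun k c => ((k : ℕ).choose c.2 : R) * z c.1 ^ ((k : ℕ) - c.2)

theorem vecMul_confluentVandermonde_apply (z : ι → R) (m : ι → ℕ) {n : ℕ} (v : Fin n → R)
    (c : Σ i, Fin (m i)) :
    (v ᵥ* confluentVandermonde z m n) c =
      (taylor (z c.1) ((degreeLTEquiv R n).symm v : R[X])).coeff c.2 := by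
  have hpoly : ((degreeLTEquiv R n).symm v : R[X]) = ∑ k : Fin n, monomial (k : ℕ) (v k) := rfl
  rw [hpoly, taylor_coeff]
  simp only [map_sum, hasseDeriv_monomial, eval_finsetSum, eval_monomial,
    vecMul, dotProduct, confluentVandermonde, of_apply]
  exact Finset.sum_congr rfl fun k _ => by ring

theorem vecMul_confluentVandermonde_eq_zero_iff (z : ι → R) (m : ι → ℕ) {n : ℕ} (v : Fin n → R) :
    v ᵥ* confluentVandermonde z m n = 0 ↔
      ∀ i, (X - C (z i)) ^ m i ∣ ((degreeLTEquiv R n).symm v : R[X]) := by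
  simp only [funext_iff, vecMul_confluentVandermonde_apply, Sigma.forall, Fin.forall_iff,
    Pi.zero_apply, X_sub_C_pow_dvd_iff, X_pow_dvd_iff, taylor_apply]

theorem vecMul_confluentVandermonde_injective [Fintype ι] {z : ι → R}
    (hz : Pairwise fun i j => IsUnit (z i - z j)) {m : ι → ℕ} {n : ℕ} (hn : n ≤ ∑ i, m i) :
    Injective (confluentVandermonde z m n).vecMul := by
  refine (injective_iff_map_eq_zero (confluentVandermonde z m n).vecMulLinear).2 fun v hv => ?_
  have hdvd := (vecMul_confluentVandermonde_eq_zero_iff z m v).1 hv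
  have hdeg := mem_degreeLT.1 ((degreeLTEquiv R n).symm v).2
  have hpoly := eq_zero_of_forall_X_sub_C_pow_dvd hz hdvd (hdeg.trans_le (mod_cast hn))
  simpa using hpoly

/-- The variant of `confluentVandermonde` whose row and column indices `k` and `r` stand for `k + 1`
and `r + 1`: the entries of row `k` are the coefficients of `t ^ (r + 1)`, for `r < m i`, in the
expansions of `(t + z i) ^ (k + 1)`. -/
def shiftedConfluentVandermonde (z : ι → R) (m : ι → ℕ) (n : ℕ) :
    Matrix (Fin n) (Σ i, Fin (m i)) R :=
  of fun k c => (((k : ℕ) + 1).choose (c.2 + 1) : R) * z c.1 ^ ((k : ℕ) - c.2)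

theorem shiftedConfluentVandermonde_apply (z : ι → R) (m : ι → ℕ) {n : ℕ} (k : Fin n)
    (c : Σ i, Fin (m i)) :
    shiftedConfluentVandermonde z m n k c =
      if (c.2 : ℕ) ≤ k then
        (((k : ℕ) + 1).choose (c.2 + 1) : R) * z c.1 ^ ((k : ℕ) - c.2)
      else 0 := by
  split_ifs with hk
  · rfl
  · simp [shiftedConfluentVandermonde, Nat.choose_eq_zero_of_lt (Nat.succ_lt_succ (not_le.1 hk))]

theorem shiftedConfluentVandermonde_mul_diagonal [Fintype ι] [DecidableEq ι] (z : ι → R)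
    (m : ι → ℕ) (n : ℕ) :
    shiftedConfluentVandermonde z m n *
        diagonal (fun c : Σ i, Fin (m i) => ((c.2 : ℕ) + 1 : R)) =
      diagonal (fun k : Fin n => ((k : ℕ) + 1 : R)) * confluentVandermonde z m n := by
  ext k c
  have hchoose : ((k : ℕ) + 1 : R) * ((k : ℕ).choose c.2 : R) =
      (((k : ℕ) + 1).choose (c.2 + 1) : R) * ((c.2 : ℕ) + 1 : R) := by
    exact_mod_cast congrArg (Nat.cast (R := R)) (Nat.add_one_mul_choose_eq k c.2)
  rw [mul_diagonal, diagonal_mul]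
  simp only [shiftedConfluentVandermonde, confluentVandermonde, of_apply]
  linear_combination -(z c.1 ^ ((k : ℕ) - c.2)) * hchoose

theorem isUnit_diagonal_natCast_add_one {n : ℕ} (hn : IsUnit (n ! : R)) :
    IsUnit (diagonal fun k : Fin n => ((k : ℕ) + 1 : R)) := by
  rw [isUnit_diagonal, Pi.isUnit_iff]
  intro k
  have hdvd : (k : ℕ) + 1 ∣ n ! := Nat.dvd_factorial k.val.succ_pos k.isLt
  exact isUnit_of_dvd_unit (mod_cast Nat.cast_dvd_cast (α := R) hdvd) hn

theorem vecMul_shiftedConfluentVandermonde_injective [Fintype ι] {z : ι → R}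
    (hz : Pairwise fun i j => IsUnit (z i - z j)) {m : ι → ℕ} {n : ℕ} (hn : n ≤ ∑ i, m i)
    (hfact : IsUnit (n ! : R)) : Injective (shiftedConfluentVandermonde z m n).vecMul := by
  classical
  have hscale (v : Fin n → R) :
      (v ᵥ* shiftedConfluentVandermonde z m n) ᵥ*
          diagonal (fun c : Σ i, Fin (m i) => ((c.2 : ℕ) + 1 : R)) =
        (v ᵥ* diagonal (fun k : Fin n => ((k : ℕ) + 1 : R))) ᵥ* confluentVandermonde z m n := by
    simp only [vecMul_vecMul, shiftedConfluentVandermonde_mul_diagonal]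
  have hinj := (vecMul_confluentVandermonde_injective hz hn).comp
    (vecMul_injective_of_isUnit (isUnit_diagonal_natCast_add_one hfact))
  intro v w hvw
  apply hinj
  simp only [Function.comp_apply, ← hscale, hvw]

end CommRing

theorem confluent_vandermonde_invertible_general {K ι : Type*} [Field K] [Finite ι]
    {z : ι → K} (hz : Injective z) {m : ι → ℕ} {n : ℕ} (hfact : (n ! : K) ≠ 0)
    (e : Fin n ≃ Σ i, Fin (m i)) :
    IsUnit ((shiftedConfluentVandermonde z m n).submatrix id e) := by
  cases nonempty_fintype ι
  have hn : n = ∑ i, m i := by simpa using Fintype.card_congr e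
  have hsub : Pairwise fun i j => IsUnit (z i - z j) :=
    fun _ _ hij => (sub_ne_zero.2 (hz.ne hij)).isUnit
  rw [← vecMul_injective_iff_isUnit]
  exact e.surjective.injective_comp_right.comp
    (vecMul_shiftedConfluentVandermonde_injective hsub hn.le hfact.isUnit)

/-- The confluent Vandermonde type matrix with rows indexed by
`k ∈ {1, …, nN}` and columns indexed by pairs `(i, r)`, `1 ≤ i ≤ n`, `1 ≤ r ≤ N`, whose
`(k, (i, r))` entry is `C(k, r)·zᵢ^(k-r)` for `k ≥ r` and `0` otherwise, is invertible whenever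
the `zᵢ` are pairwise distinct.  (Here rows and columns are `0`-based: the row `k₀` corresponds
to `k = k₀ + 1` and the column `(i₀, r₀)` to `(i, r) = (i₀ + 1, r₀ + 1)`.) -/
theorem confluent_vandermonde_invertible
    (n N : ℕ) (hn : 1 ≤ n) (hN : 1 ≤ N)
    (z : Fin n → ℂ) (hz : Function.Injective z)
    (A : Matrix (Fin (n * N)) (Fin (n * N)) ℂ)
    (hA : ∀ (k : Fin (n * N)) (c : Fin (n * N)),
      A k c =
        if ((finProdFinEquiv.symm c).2 : ℕ) ≤ (k : ℕ) then
          (Nat.choose ((k : ℕ) + 1) (((finProdFinEquiv.symm c).2 : ℕ) + 1) : ℂ) *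
            z (finProdFinEquiv.symm c).1 ^ ((k : ℕ) - ((finProdFinEquiv.symm c).2 : ℕ))
        else 0) :
    IsUnit A := by
  let e : Fin (n * N) ≃ Σ _ : Fin n, Fin N :=
    finProdFinEquiv.symm.trans (Equiv.sigmaEquivProd (Fin n) (Fin N)).symm
  have hAe : A = (shiftedConfluentVandermonde z (fun _ => N) (n * N)).submatrix id e :=
    Matrix.ext fun k c => (hA k c).trans (shiftedConfluentVandermonde_apply z _ k (e c)).symm
  exact hAe ▸ confluent_vandermonde_invertible_general hz (mod_cast Nat.factorial_ne_zero _) e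
end

section
/- Let 𝔤 be a finite-dimensional simple Lie algebra over ℂ and (π₁,v₁),…,(πₙ,vₙ) finite-dimensional cyclic 𝔤-modules. There exists a nonzero polynomial D ∈ ℂ[z₁,…,zₙ] such that for any two tuples Z₁ and Z₂ of pairwise distinct complex numbers satisfying D(Z₁) ≠ 0 and D(Z₂) ≠ 0, there is a linear automorphism φ of π₁⊗⋯⊗πₙ that commutes with the diagonal action of 𝔤 and satisfies φ(Fⁱ_{Z₁}) = Fⁱ_{Z₂} for all i ≥ 0; i.e., the filtered tensor products at any two points of a suitable Zariski open subset of ℂⁿ∖Δ are isomorphic as filtered 𝔤-modules. -/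
open scoped TensorProduct
open PiTensorProduct

/-!
By Weyl's theorem every finite-dimensional `L`-module `M` is the direct sum of its invariants and
`⁅L, M⁆`, and the resulting Reynolds projection onto the invariants preserves all submodules.
Indeed, if `M` is not trivial, some simple ideal `A` acts nontrivially; its Casimir endomorphism
commutes with `L`, kills the invariants, takes values in `⁅L, M⁆` and has trace `dim A ≠ 0`.
So it is not nilpotent, its Fitting decomposition splits `M`, and one proceeds by induction.

Let `X` be the tensor product and choose `z₀` at which the dimensions of the steps of the filtration
are maximal. Every vector of `F z₀ i` extends polynomially to a section of `z ↦ F z i`; applied to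
projections adapted to the filtration at `z₀`, this gives endomorphisms `T z` of `X`, polynomial in
`z`, with `T z₀ = 1` and `T z (F z₀ i) ⊆ F z i`. The Reynolds projection on `X →ₗ[ℂ] X` makes `T z`
equivariant and keeps these three properties. Where `D z = det (T z)` does not vanish, `T z` is
injective on each `F z₀ i`, so by maximality of the dimensions it maps `F z₀ i` onto `F z i`.
-/

namespace Fusion

/-! ### Complete reducibility and the Reynolds operator -/

section CompleteReducibility

open LieModule Module

section Perfect

variable {R L M : Type*} [CommRing R] [LieRing L] [LieAlgebra R L] [AddCommGroup M] [Module R M]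
  [LieRingModule L M] [LieModule R L M]

lemma lie_top_le_lie_top_lie_top (hL : ⁅(⊤ : LieIdeal R L), (⊤ : LieIdeal R L)⁆ = ⊤)
    (N : LieSubmodule R L M) :
    ⁅(⊤ : LieIdeal R L), N⁆ ≤ ⁅(⊤ : LieIdeal R L), ⁅(⊤ : LieIdeal R L), N⁆⁆ := by
  rw [LieSubmodule.lie_le_iff]
  intro x _ m hm
  have hx : x ∈ ⁅(⊤ : LieIdeal R L), (⊤ : LieIdeal R L)⁆ := by rw [hL]; trivial
  rw [← LieSubmodule.mem_toSubmodule, LieSubmodule.lieIdeal_oper_eq_linear_span'] at hx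
  induction hx using Submodule.span_induction with
  | mem _ h =>
    obtain ⟨y, hy, z, hz, rfl⟩ := h
    rw [lie_lie]
    exact sub_mem (LieSubmodule.lie_mem_lie hy (LieSubmodule.lie_mem_lie hz hm))
      (LieSubmodule.lie_mem_lie hz (LieSubmodule.lie_mem_lie hy hm))
  | zero => simp
  | add y z _ _ hy hz => simpa only [add_lie] using add_mem (hy trivial) (hz trivial)
  | smul c y _ hy => simpa only [smul_lie] using SMulMemClass.smul_mem c (hy trivial)

lemma isTrivial_of_isNilpotent_of_perfect (hL : ⁅(⊤ : LieIdeal R L), (⊤ : LieIdeal R L)⁆ = ⊤)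
    [LieModule.IsNilpotent L M] : IsTrivial L M := by
  have lcs_le (k : ℕ) : lowerCentralSeries R L M 1 ≤ lowerCentralSeries R L M (k + 1) := by
    induction k with
    | zero => exact le_rfl
    | succ k ih =>
      rw [lowerCentralSeries_succ R L M k] at ih
      rw [lowerCentralSeries_succ R L M (k + 1), lowerCentralSeries_succ R L M k]
      exact ih.trans (lie_top_le_lie_top_lie_top hL _)
  obtain ⟨k, hk⟩ := (LieModule.isNilpotent_iff R L M).1 inferInstance
  have lcs_eq_bot : lowerCentralSeries R L M 1 = ⊥ :=
    eq_bot_iff.2 ((lcs_le k).trans (hk ▸ antitone_lowerCentralSeries R L M k.le_succ))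
  rwa [trivial_iff_lower_central_eq_bot R L M]

end Perfect

section Simple

open LieAlgebra.InvariantForm in
lemma nondegenerate_of_lieInvariant_of_isSimple {R L : Type*} [CommRing R] [LieRing L]
    [LieAlgebra R L] [LieAlgebra.IsSimple R L] {Φ : LinearMap.BilinForm R L}
    (hinv : Φ.lieInvariant L) (hrefl : Φ.IsRefl) (h0 : Φ ≠ 0) : Φ.Nondegenerate := by
  have orthogonal_eq_bot : orthogonal Φ hinv ⊤ = ⊥ := by
    refine (LieAlgebra.IsSimple.eq_bot_or_eq_top (orthogonal Φ hinv ⊤)).resolve_right fun htop => ?_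
    refine h0 (LinearMap.ext₂ fun x y => ?_)
    exact (mem_orthogonal Φ hinv ⊤ y).1 (by rw [htop]; trivial) x trivial
  refine hrefl.nondegenerate_iff_separatingRight.2 fun y hy => ?_
  have : y ∈ orthogonal Φ hinv ⊤ := (mem_orthogonal Φ hinv ⊤ y).2 fun x _ => hy x
  rwa [orthogonal_eq_bot, LieSubmodule.mem_bot] at this

lemma lie_top_top_of_isSimple (R L : Type*) [CommRing R] [LieRing L] [LieAlgebra R L]
    [LieAlgebra.IsSimple R L] : ⁅(⊤ : LieIdeal R L), (⊤ : LieIdeal R L)⁆ = ⊤ :=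
  (LieAlgebra.IsSimple.eq_bot_or_eq_top _).resolve_left fun h =>
    LieAlgebra.IsSimple.non_abelian R ((trivial_iff_lower_central_eq_bot R L L).2 h)

variable {K L M : Type*} [Field K] [LieRing L] [LieAlgebra K L] [LieAlgebra.IsSimple K L]
  [AddCommGroup M] [Module K M] [LieRingModule L M] [LieModule K L M] [FiniteDimensional K M]

lemma traceForm_ne_zero_of_isSimple [CharZero K] (h : ¬ IsTrivial L M) : traceForm K L M ≠ 0 := by
  refine fun h0 => h ?_
  have hL := lie_top_top_of_isSimple K L
  have derived_eq_top : LieAlgebra.derivedSeries K L 1 = ⊤ := hL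
  have hnil := isNilpotent_derivedSeries_of_traceForm_eq_zero h0
  have : LieModule.IsNilpotent L M := by
    rw [LieModule.isNilpotent_iff_forall' (R := K)] at hnil ⊢
    exact fun x => hnil ⟨x, by rw [derived_eq_top]; trivial⟩
  exact isTrivial_of_isNilpotent_of_perfect hL

lemma traceForm_nondegenerate_of_isSimple [CharZero K] (h : ¬ IsTrivial L M) :
    (traceForm K L M).Nondegenerate :=
  nondegenerate_of_lieInvariant_of_isSimple (traceForm_lieInvariant K L M)
    (traceForm_isSymm K L M).isRefl (traceForm_ne_zero_of_isSimple h)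

end Simple

section Casimir

lemma finiteDimensional_of_traceForm_nondegenerate {K L M : Type*} [Field K] [LieRing L]
    [LieAlgebra K L] [AddCommGroup M] [Module K M] [LieRingModule L M] [LieModule K L M]
    [FiniteDimensional K M] (h : (traceForm K L M).Nondegenerate) : FiniteDimensional K L := by
  refine FiniteDimensional.of_injective (toEnd K L M : L →ₗ[K] End K M) ?_
  refine (injective_iff_map_eq_zero _).2 fun x hx => h.1 x fun y => ?_
  have hx : toEnd K L M x = 0 := hx
  simp [traceForm_apply_apply, hx]

lemma sum_apply_dualBasis_eq {K V E κ : Type*} [Field K] [AddCommGroup V] [Module K V]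
    [AddCommGroup E] [Module K E] [Fintype κ] [DecidableEq κ] {Φ : LinearMap.BilinForm K V}
    (hΦ : Φ.Nondegenerate) (b : Basis κ K V) (β : V →ₗ[K] V →ₗ[K] E) {f g : V →ₗ[K] V}
    (hfg : ∀ a c, Φ (g a) c = Φ a (f c)) :
    ∑ i, β (f (b i)) (Φ.dualBasis hΦ b i) = ∑ i, β (b i) (g (Φ.dualBasis hΦ b i)) := by
  set b' := Φ.dualBasis hΦ b with hb'
  have repr_eq (j : κ) (c : V) : b.repr c j = Φ (b' j) c := by
    conv_rhs => rw [← b.sum_repr c]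
    simp [-Basis.sum_repr, hb', LinearMap.BilinForm.apply_dualBasis_left]
  have hf (i : κ) : f (b i) = ∑ j, Φ (b' j) (f (b i)) • b j := by
    simp only [← repr_eq, b.sum_repr]
  have hg (j : κ) : g (b' j) = ∑ i, Φ (b' j) (f (b i)) • b' i := by
    simp only [← hfg, hb', ← LinearMap.BilinForm.dualBasis_repr_apply hΦ, Basis.sum_repr]
  calc ∑ i, β (f (b i)) (b' i)
      = ∑ i, ∑ j, Φ (b' j) (f (b i)) • β (b j) (b' i) := by
        refine Finset.sum_congr rfl fun i _ => ?_
        conv_lhs => rw [hf i]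
        simp
    _ = ∑ j, ∑ i, Φ (b' j) (f (b i)) • β (b j) (b' i) := Finset.sum_comm
    _ = ∑ j, β (b j) (g (b' j)) := by simp only [hg, map_sum, map_smul]

variable {K L M : Type*} [Field K] [LieRing L] [LieAlgebra K L]
  [AddCommGroup M] [Module K M] [LieRingModule L M] [LieModule K L M]
  {A : LieIdeal K L} [FiniteDimensional K A] (h : (traceForm K A M).Nondegenerate)

/-- The Casimir endomorphism `∑ aᵢ aⁱ` of `M` for an ideal `A` of `L`: the `aᵢ` are a basis of `A`
and the `aⁱ` the dual basis for the trace form of `M`. -/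
noncomputable def casimir : End K M :=
  ∑ i, toEnd K A M (finBasis K A i) *
    toEnd K A M (LinearMap.BilinForm.dualBasis (traceForm K A M) h (finBasis K A) i)

omit [FiniteDimensional K A] in
lemma traceForm_lieIdeal_apply_lie (x : L) (a c : A) :
    traceForm K A M (-⁅x, a⁆) c = traceForm K A M a ⁅x, c⁆ := by
  have := traceForm_lieInvariant K L M x a c
  rw [map_neg, LinearMap.neg_apply, neg_eq_iff_eq_neg]
  exact this

lemma casimir_lie (x : L) (m : M) : casimir h ⁅x, m⁆ = ⁅x, casimir h m⁆ := by
  set b' := LinearMap.BilinForm.dualBasis (traceForm K A M) h (finBasis K A)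
  let act : A →ₗ[K] A →ₗ[K] M :=
    LinearMap.mk₂ K (fun a c => ⁅a, ⁅c, m⁆⁆) (by simp) (by simp) (by simp) (by simp)
  have sum_act_lie : ∑ i, act ⁅x, finBasis K A i⁆ (b' i) = ∑ i, act (finBasis K A i) (-⁅x, b' i⁆) :=
    sum_apply_dualBasis_eq h (finBasis K A) act (f := toEnd K L A x) (g := -toEnd K L A x)
      (traceForm_lieIdeal_apply_lie x)
  have expand (i) : ⁅x, act (finBasis K A i) (b' i)⁆ = ⁅finBasis K A i, ⁅b' i, ⁅x, m⁆⁆⁆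
      + (act ⁅x, finBasis K A i⁆ (b' i) - act (finBasis K A i) (-⁅x, b' i⁆)) := by
    simp [act]
  calc casimir h ⁅x, m⁆ = ∑ i, ⁅finBasis K A i, ⁅b' i, ⁅x, m⁆⁆⁆ := by simp [casimir, b']
    _ = ∑ i, ⁅x, act (finBasis K A i) (b' i)⁆ := by
      rw [Finset.sum_congr rfl fun i _ => expand i, Finset.sum_add_distrib,
        Finset.sum_sub_distrib, sum_act_lie, sub_self, add_zero]
    _ = ⁅x, casimir h m⁆ := by simp [casimir, b', act, lie_sum]

lemma casimir_mem_lie_top (m : M) :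
    casimir h m ∈ ⁅(⊤ : LieIdeal K L), (⊤ : LieSubmodule K L M)⁆ := by
  simp only [casimir, LinearMap.sum_apply, Module.End.mul_apply]
  exact sum_mem fun i _ =>
    LieSubmodule.lie_mem_lie (LieSubmodule.mem_top (finBasis K A i : L)) (LieSubmodule.mem_top _)

lemma casimir_eq_zero_of_mem_maxTrivSubmodule {m : M} (hm : m ∈ maxTrivSubmodule K L M) :
    casimir h m = 0 := by
  have hA (a : A) : ⁅a, m⁆ = 0 := hm a
  simp [casimir, hA]

lemma trace_casimir : LinearMap.trace K M (casimir h) = finrank K A := by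
  set b' := LinearMap.BilinForm.dualBasis (traceForm K A M) h (finBasis K A)
  have trace_eq_one (i) :
      LinearMap.trace K M (toEnd K A M (finBasis K A i) * toEnd K A M (b' i)) = 1 := by
    have := LinearMap.BilinForm.apply_dualBasis_right h ⟨traceForm_comm K A M⟩ (finBasis K A) i i
    rwa [if_pos rfl] at this
  simp [casimir, trace_eq_one, b']

lemma casimir_pow_lie (k : ℕ) (x : L) (m : M) :
    (casimir h ^ k) ⁅x, m⁆ = ⁅x, (casimir h ^ k) m⁆ := by
  have hcomm : Commute (casimir h) (toEnd K L M x) := LinearMap.ext (casimir_lie h x)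
  exact LinearMap.congr_fun (hcomm.pow_left k) m

end Casimir

section Invariants

variable {R L M : Type*} [CommRing R] [LieRing L] [LieAlgebra R L]
  [AddCommGroup M] [Module R M] [LieRingModule L M] [LieModule R L M]

lemma map_incl_maxTrivSubmodule (N : LieSubmodule R L M) :
    (maxTrivSubmodule R L N).map N.incl = N ⊓ maxTrivSubmodule R L M := by
  rw [← LieSubmodule.map_comap_incl]
  congr 1
  ext m
  simp [Subtype.ext_iff]

lemma map_incl_lie_top (N : LieSubmodule R L M) :
    (⁅(⊤ : LieIdeal R L), (⊤ : LieSubmodule R L N)⁆).map N.incl = ⁅(⊤ : LieIdeal R L), N⁆ := by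
  rw [LieSubmodule.map_bracket_eq, LieSubmodule.map_incl_top]

lemma inf_maxTrivSubmodule_sup_lie_top {N : LieSubmodule R L M}
    (hN : Codisjoint (maxTrivSubmodule R L N) ⁅(⊤ : LieIdeal R L), (⊤ : LieSubmodule R L N)⁆) :
    N ⊓ maxTrivSubmodule R L M ⊔ ⁅(⊤ : LieIdeal R L), N⁆ = N := by
  rw [← map_incl_maxTrivSubmodule, ← map_incl_lie_top, ← LieSubmodule.map_sup, hN.eq_top,
    LieSubmodule.map_incl_top]

lemma disjoint_inf_maxTrivSubmodule_lie_top {N : LieSubmodule R L M}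
    (hN : Disjoint (maxTrivSubmodule R L N) ⁅(⊤ : LieIdeal R L), (⊤ : LieSubmodule R L N)⁆) :
    Disjoint (N ⊓ maxTrivSubmodule R L M) ⁅(⊤ : LieIdeal R L), N⁆ := by
  rw [← map_incl_maxTrivSubmodule, ← map_incl_lie_top, ← LieSubmodule.disjoint_toSubmodule]
  exact Submodule.disjoint_map N.injective_incl (LieSubmodule.disjoint_toSubmodule.2 hN)

lemma isCompl_maxTrivSubmodule_lie_top_of_isCompl {N N' : LieSubmodule R L M} (hNN' : IsCompl N N')
    (htriv : maxTrivSubmodule R L M ≤ N)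
    (hlie : N' ≤ ⁅(⊤ : LieIdeal R L), (⊤ : LieSubmodule R L M)⁆)
    (hN : IsCompl (maxTrivSubmodule R L N) ⁅(⊤ : LieIdeal R L), (⊤ : LieSubmodule R L N)⁆) :
    IsCompl (maxTrivSubmodule R L M) ⁅(⊤ : LieIdeal R L), (⊤ : LieSubmodule R L M)⁆ := by
  have hsup := inf_maxTrivSubmodule_sup_lie_top hN.codisjoint
  have hdisj := disjoint_inf_maxTrivSubmodule_lie_top hN.disjoint
  rw [inf_eq_right.2 htriv] at hsup hdisj
  have lie_le_N : N ⊓ ⁅(⊤ : LieIdeal R L), (⊤ : LieSubmodule R L M)⁆ ≤ ⁅(⊤ : LieIdeal R L), N⁆ := by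
    have := LieSubmodule.lie_le_right N' (⊤ : LieIdeal R L)
    have hbot : N ⊓ ⁅(⊤ : LieIdeal R L), N'⁆ = ⊥ := (hNN'.disjoint.mono_right this).eq_bot
    rw [← hNN'.sup_eq_top, LieSubmodule.lie_sup, inf_comm,
      sup_inf_assoc_of_le _ (LieSubmodule.lie_le_right _ _), inf_comm, hbot, sup_bot_eq]
  constructor
  · rw [disjoint_iff_inf_le]
    calc _ ≤ maxTrivSubmodule R L M ⊓ (N ⊓ ⁅(⊤ : LieIdeal R L), (⊤ : LieSubmodule R L M)⁆) :=
          le_inf inf_le_left (inf_le_inf_right _ htriv)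
      _ ≤ maxTrivSubmodule R L M ⊓ ⁅(⊤ : LieIdeal R L), N⁆ := inf_le_inf_left _ lie_le_N
      _ ≤ ⊥ := hdisj.le_bot
  · rw [codisjoint_iff_le_sup]
    calc (⊤ : LieSubmodule R L M) = N ⊔ N' := hNN'.sup_eq_top.symm
      _ = maxTrivSubmodule R L M ⊔ ⁅(⊤ : LieIdeal R L), N⁆ ⊔ N' := by rw [hsup]
      _ ≤ _ := sup_le (sup_le_sup_left (LieSubmodule.mono_lie_right _ le_top) _)
        (hlie.trans le_sup_right)

end Invariants

section Semisimple

lemma exists_isAtom_not_isTrivial {R L M : Type*} [CommRing R] [LieRing L] [LieAlgebra R L]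
    [AddCommGroup M] [Module R M] [LieRingModule L M] [LieModule R L M]
    [LieAlgebra.IsSemisimple R L] (h : ¬ IsTrivial L M) :
    ∃ A : LieIdeal R L, IsAtom A ∧ ¬ IsTrivial A M := by
  by_contra! hA
  have atom_le_ker (A : LieIdeal R L) (hAtom : IsAtom A) : A ≤ LieModule.ker R L M := by
    have := hA A hAtom
    exact fun x hx => (LieModule.mem_ker R L M x).2 fun m => trivial_lie_zero A M ⟨x, hx⟩ m
  have ker_eq_top : LieModule.ker R L M = ⊤ := by
    rw [eq_top_iff, ← LieAlgebra.IsSemisimple.sSup_atoms_eq_top]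
    exact sSup_le atom_le_ker
  exact h ⟨fun x m => (LieModule.mem_ker R L M x).1 (ker_eq_top ▸ LieSubmodule.mem_top x) m⟩

variable {K L M : Type*} [Field K] [CharZero K] [LieRing L] [LieAlgebra K L]
  [LieAlgebra.IsSemisimple K L] [AddCommGroup M] [Module K M] [LieRingModule L M]
  [LieModule K L M] [FiniteDimensional K M]

lemma exists_isCompl_of_not_isTrivial (h : ¬ IsTrivial L M) :
    ∃ N N' : LieSubmodule K L M, IsCompl N N' ∧ N ≠ ⊤ ∧ maxTrivSubmodule K L M ≤ N ∧
      N' ≤ ⁅(⊤ : LieIdeal K L), (⊤ : LieSubmodule K L M)⁆ := by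
  obtain ⟨A, hAtom, hA⟩ := exists_isAtom_not_isTrivial (R := K) h
  have := LieAlgebra.IsSemisimple.isSimple_of_isAtom A hAtom
  have hB : (traceForm K A M).Nondegenerate := traceForm_nondegenerate_of_isSimple hA
  have := finiteDimensional_of_traceForm_nondegenerate hB
  obtain ⟨k, hk, hk0⟩ := ((LinearMap.eventually_isCompl_ker_pow_range_pow (casimir hB)).and
    (Filter.eventually_gt_atTop 0)).exists
  let Ck : M →ₗ⁅K,L⁆ M := { casimir hB ^ k with map_lie' := casimir_pow_lie hB k _ _ }
  refine ⟨Ck.ker, Ck.range, ?_, fun htop => ?_, fun m hm => ?_, ?_⟩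
  · rwa [← LieSubmodule.isCompl_toSubmodule]
  · have hnil : _root_.IsNilpotent (casimir hB) := ⟨k, LinearMap.ker_eq_top.1 <| by
      simpa using congrArg LieSubmodule.toSubmodule htop⟩
    have htrace := (LinearMap.isNilpotent_trace_of_isNilpotent hnil).eq_zero
    rw [trace_casimir, Nat.cast_eq_zero] at htrace
    have := LieAlgebra.IsSimple.nontrivial K A
    exact (Module.finrank_pos (R := K) (M := A)).ne' htrace
  · obtain ⟨j, rfl⟩ := Nat.exists_eq_add_one.2 hk0
    change (casimir hB ^ (j + 1)) m = 0
    rw [pow_succ, Module.End.mul_apply, casimir_eq_zero_of_mem_maxTrivSubmodule hB hm, map_zero]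
  · obtain ⟨j, rfl⟩ := Nat.exists_eq_add_one.2 hk0
    rintro _ ⟨m, rfl⟩
    change (casimir hB ^ (j + 1)) m ∈ _
    rw [pow_succ', Module.End.mul_apply]
    exact casimir_mem_lie_top hB _

variable (K L M) in
theorem isCompl_maxTrivSubmodule_lie_top :
    IsCompl (maxTrivSubmodule K L M) ⁅(⊤ : LieIdeal K L), (⊤ : LieSubmodule K L M)⁆ := by
  induction hd : finrank K M using Nat.strong_induction_on generalizing M with
  | _ d ih =>
    by_cases h : IsTrivial L M
    · rw [(isTrivial_iff_max_triv_eq_top K L M).1 h, LieSubmodule.trivial_lie_oper_zero]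
      exact isCompl_top_bot
    · obtain ⟨N, N', hNN', hN, htriv, hlie⟩ := exists_isCompl_of_not_isTrivial (K := K) h
      refine isCompl_maxTrivSubmodule_lie_top_of_isCompl hNN' htriv hlie (ih _ ?_ N rfl)
      rw [← hd]
      exact Submodule.finrank_lt (by simpa using hN)

variable (K L M) in
/-- The Reynolds operator of `M`: the projection onto the invariants `M ^ L` whose kernel is
`⁅L, M⁆`. -/
noncomputable def reynolds : M →ₗ[K] M :=
  Submodule.projection _ _
    (LieSubmodule.isCompl_toSubmodule.2 (isCompl_maxTrivSubmodule_lie_top K L M))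

variable (K L)

lemma reynolds_mem_maxTrivSubmodule (m : M) : reynolds K L M m ∈ maxTrivSubmodule K L M :=
  Submodule.projection_apply_mem _ m

lemma reynolds_eq_self {m : M} (hm : m ∈ maxTrivSubmodule K L M) : reynolds K L M m = m :=
  Submodule.projection_apply_of_mem_left _ hm

lemma reynolds_mem {N : LieSubmodule K L M} {m : M} (hm : m ∈ N) : reynolds K L M m ∈ N := by
  have hsup := inf_maxTrivSubmodule_sup_lie_top (isCompl_maxTrivSubmodule_lie_top K L N).codisjoint
  obtain ⟨a, ha, c, hc, rfl⟩ := (LieSubmodule.mem_sup _ _ _).1 (hsup.symm ▸ hm)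
  have hc : reynolds K L M c = 0 :=
    (Submodule.projection_apply_eq_zero_iff _).2 (LieSubmodule.mono_lie_right _ le_top hc)
  rw [map_add, hc, add_zero, reynolds_eq_self K L ha.2]
  exact ha.1

end Semisimple

end CompleteReducibility

/-! ### Polynomial families of filtrations -/

section PolynomialFamily

open Module

variable (K σ X : Type*) [Field K] [AddCommGroup X] [Module K X]

/-- The maps from affine space to `X` that are polynomial, i.e. finite sums of `z ↦ p(z) • u`. -/
def polynomialFamily : Submodule K ((σ → K) → X) :=
  Submodule.span K {s | ∃ (p : MvPolynomial σ K) (u : X), s = fun z => MvPolynomial.eval z p • u}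

variable {K σ X} {Y : Type*} [AddCommGroup Y] [Module K Y]

lemma eval_smul_mem_polynomialFamily (p : MvPolynomial σ K) (u : X) :
    (fun z => MvPolynomial.eval z p • u) ∈ polynomialFamily K σ X :=
  Submodule.subset_span ⟨p, u, rfl⟩

lemma const_mem_polynomialFamily (u : X) : (fun _ => u) ∈ polynomialFamily K σ X := by
  simpa using eval_smul_mem_polynomialFamily (σ := σ) (1 : MvPolynomial σ K) u

lemma map_mem_polynomialFamily (f : X →ₗ[K] Y) {s : (σ → K) → X}
    (hs : s ∈ polynomialFamily K σ X) : (fun z => f (s z)) ∈ polynomialFamily K σ Y := by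
  suffices polynomialFamily K σ X ≤ (polynomialFamily K σ Y).comap (f.compLeft (σ → K)) from this hs
  refine Submodule.span_le.2 ?_
  rintro _ ⟨p, u, rfl⟩
  exact Submodule.subset_span ⟨p, f u, by ext z; simp⟩

lemma exists_eval_eq_of_mem_polynomialFamily {s : (σ → K) → K}
    (hs : s ∈ polynomialFamily K σ K) :
    ∃ p : MvPolynomial σ K, ∀ z, MvPolynomial.eval z p = s z := by
  let ev : MvPolynomial σ K →ₗ[K] (σ → K) → K :=
    LinearMap.pi fun z => (MvPolynomial.aeval z).toLinearMap
  suffices polynomialFamily K σ K ≤ LinearMap.range ev by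
    obtain ⟨p, rfl⟩ := this hs
    exact ⟨p, fun z => (MvPolynomial.aeval_eq_eval z ▸ rfl)⟩
  refine Submodule.span_le.2 ?_
  rintro _ ⟨p, c, rfl⟩
  exact ⟨c • p, by ext z; simp [ev, mul_comm, MvPolynomial.aeval_eq_eval]⟩

lemma eval_smul_apply_mem_polynomialFamily (p : MvPolynomial σ K) {s : (σ → K) → X}
    (hs : s ∈ polynomialFamily K σ X) :
    (fun z => MvPolynomial.eval z p • s z) ∈ polynomialFamily K σ X := by
  let mulEval : ((σ → K) → X) →ₗ[K] (σ → K) → X :=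
    LinearMap.pi fun z => MvPolynomial.eval z p • LinearMap.proj z
  suffices polynomialFamily K σ X ≤ (polynomialFamily K σ X).comap mulEval from this hs
  refine Submodule.span_le.2 ?_
  rintro _ ⟨q, u, rfl⟩
  exact Submodule.subset_span ⟨p * q, u, by ext z; simp [mulEval, mul_smul]⟩

lemma exists_eval_eq_det [FiniteDimensional K X] {T : (σ → K) → End K X}
    (hT : T ∈ polynomialFamily K σ (End K X)) :
    ∃ D : MvPolynomial σ K, ∀ z, MvPolynomial.eval z D = LinearMap.det (T z) := by
  let b := finBasis K X
  have entry (i j) : ∃ p : MvPolynomial σ K,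
      ∀ z, MvPolynomial.eval z p = LinearMap.toMatrix b b (T z) i j :=
    exists_eval_eq_of_mem_polynomialFamily <|
      map_mem_polynomialFamily
        (Matrix.entryLinearMap K K i j ∘ₗ (LinearMap.toMatrix b b).toLinearMap) hT
  choose p hp using entry
  refine ⟨(Matrix.of p).det, fun z => ?_⟩
  rw [RingHom.map_det, ← LinearMap.det_toMatrix b]
  congr 1
  ext i j
  exact hp i j z

end PolynomialFamily

section Filtration

open Module

lemma exists_maximalFor_of_monotone_of_le {α : Type*} [Nonempty α] {f : α → ℕ → ℕ} {d : ℕ}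
    (hmono : ∀ a, Monotone (f a)) (hle : ∀ a i, f a i ≤ d) :
    ∃ a, MaximalFor (fun _ => True) f a := by
  obtain ⟨⟨a₁, N⟩, -, hN⟩ := Set.Finite.exists_maximalFor' (fun p : α × ℕ => f p.1 p.2) Set.univ
    ((Set.finite_Iic d).subset (by rintro _ ⟨p, -, rfl⟩; exact hle p.1 p.2)) Set.univ_nonempty
  have le_N (b i) : f b i ≤ f a₁ N :=
    (le_total _ _).elim (fun h => hN (j := (b, i)) trivial h) id
  obtain ⟨a, haN, ha⟩ := Set.Finite.exists_maximalFor' (fun (b : α) (i : Fin N) => f b i)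
    {b | f b N = f a₁ N}
    ((Set.finite_Iic fun _ => d).subset (by rintro _ ⟨b, -, rfl⟩; exact fun i => hle b i)) ⟨a₁, rfl⟩
  refine ⟨a, trivial, fun b _ hab i => ?_⟩
  have hbN : f b N = f a₁ N := (le_N b N).antisymm (haN ▸ hab N)
  rcases lt_or_ge i N with hi | hi
  · exact ha hbN (fun j => hab j) ⟨i, hi⟩
  · exact (le_N b i).trans (haN ▸ hmono a hi)

variable {K σ X : Type*} [Field K] [AddCommGroup X] [Module K X]

lemma exists_maximalFor_finrank {α : Type*} [Nonempty α] [FiniteDimensional K X]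
    {F : α → ℕ → Submodule K X} (hF : ∀ a, Monotone (F a)) :
    ∃ a, MaximalFor (fun _ => True) (fun a i => finrank K (F a i)) a :=
  exists_maximalFor_of_monotone_of_le (fun a _ _ hij => Submodule.finrank_mono (hF a hij))
    fun a i => (F a i).finrank_le

lemma exists_sum_eq_one_of_monotone [FiniteDimensional K X] {G : ℕ → Submodule K X}
    (hG : Monotone G) :
    ∃ (N : ℕ) (r : ℕ → End K X) (s : End K X), ∑ i ∈ Finset.range N, r i + s = 1 ∧
      (∀ i u, r i u ∈ G i) ∧ (∀ i j, j < i → ∀ u ∈ G j, r i u = 0) ∧ ∀ j, ∀ u ∈ G j, s u = 0 := by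
  choose G' hG' using fun i => (G i).exists_isCompl
  obtain ⟨N, hN⟩ := monotone_stabilizes_iff_noetherian.2
    (inferInstanceAs (IsNoetherian K X)) ⟨G, hG⟩
  have le_G_N (j : ℕ) : G j ≤ G N :=
    (le_total j N).elim (fun h => hG h) fun h => (hN j h).ge
  let q : ℕ → End K X
    | 0 => 0
    | i + 1 => (G i).projection (G' i) (hG' i)
  have q_mem {i j : ℕ} (hij : i ≤ j + 1) (u : X) : q i u ∈ G j := by
    match i with
    | 0 => exact zero_mem _
    | i + 1 => exact hG (by omega) (Submodule.projection_apply_mem (hG' i) u)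
  have q_eq {i : ℕ} {u : X} (hu : u ∈ G i) : q (i + 1) u = u :=
    Submodule.projection_apply_of_mem_left _ hu
  refine ⟨N + 1, fun i => q (i + 1) - q i, 1 - q (N + 1), ?_, fun i u => ?_,
    fun i j hij u hu => ?_, fun j u hu => ?_⟩
  · have q_zero : q 0 = 0 := rfl
    rw [Finset.sum_range_sub, q_zero, sub_zero, add_sub_cancel]
  · exact sub_mem (q_mem le_rfl u) (q_mem i.le_succ u)
  · obtain ⟨i, rfl⟩ := Nat.exists_eq_add_one.2 (Nat.zero_lt_of_lt hij)
    rw [LinearMap.sub_apply, q_eq (hG hij.le hu), q_eq (hG (Nat.lt_succ_iff.1 hij) hu), sub_self]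
  · rw [LinearMap.sub_apply, q_eq (le_G_N j hu), Module.End.one_apply, sub_self]

/-- A family of increasing filtrations of `X`, indexed by the points `z` of affine space, is
polynomial if every vector of its `i`-th step at any point `z₀` is the value at `z₀` of a polynomial
map lying in the `i`-th step at every point. -/
structure IsPolynomialFiltration (F : (σ → K) → ℕ → Submodule K X) : Prop where
  mono : ∀ z, Monotone (F z)
  exists_section : ∀ z₀ i, ∀ u ∈ F z₀ i,
    ∃ s ∈ polynomialFamily K σ X, (∀ z, s z ∈ F z i) ∧ s z₀ = u

namespace IsPolynomialFiltration

variable [FiniteDimensional K X] {F : (σ → K) → ℕ → Submodule K X}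

lemma exists_lift (hF : IsPolynomialFiltration F) {z₀ : σ → K} {i : ℕ} {r : End K X}
    (hr : ∀ u, r u ∈ F z₀ i) :
    ∃ R ∈ polynomialFamily K σ (End K X), R z₀ = r ∧ (∀ z u, R z u ∈ F z i) ∧
      ∀ z u, r u = 0 → R z u = 0 := by
  let b := finBasis K (F z₀ i)
  choose s hs hsF hs₀ using fun j => hF.exists_section z₀ i (b j) (b j).2
  let coord (j) : X →ₗ[K] K := b.coord j ∘ₗ r.codRestrict _ hr
  refine ⟨fun z => ∑ j, (coord j).smulRight (s j z), ?_, ?_, fun z u => ?_, fun z u hu => ?_⟩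
  · rw [← Finset.sum_fn]
    exact sum_mem fun j _ => map_mem_polynomialFamily (LinearMap.smulRightₗ (coord j)) (hs j)
  · ext u
    have := congrArg Subtype.val (b.sum_repr (r.codRestrict _ hr u))
    simpa [-Basis.sum_repr, hs₀, coord] using this
  · simpa using sum_mem fun j _ => Submodule.smul_mem _ _ (hsF j z)
  · have : r.codRestrict _ hr u = 0 := Subtype.ext hu
    simp [coord, this]

lemma exists_transport (hF : IsPolynomialFiltration F) (z₀ : σ → K) :
    ∃ T ∈ polynomialFamily K σ (End K X), T z₀ = 1 ∧ ∀ z i, ∀ u ∈ F z₀ i, T z u ∈ F z i := by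
  obtain ⟨N, r, s, hsum, hr, hr0, hs0⟩ := exists_sum_eq_one_of_monotone (hF.mono z₀)
  choose R hR hRz₀ hRF hR0 using fun i => hF.exists_lift (hr i)
  refine ⟨fun z => ∑ i ∈ Finset.range N, R i z + s, ?_, ?_, fun z j u hu => ?_⟩
  · have := add_mem (sum_mem fun i (_ : i ∈ Finset.range N) => hR i) (const_mem_polynomialFamily s)
    convert this using 1
    ext z
    simp
  · simpa only [hRz₀] using hsum
  · rw [LinearMap.add_apply, hs0 j u hu, add_zero, LinearMap.sum_apply]
    refine sum_mem fun i _ => ?_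
    rcases lt_or_ge j i with hji | hij
    · rw [hR0 i z u (hr0 i j hji u hu)]
      exact zero_mem _
    · exact hF.mono z hij (hRF i z u)

end IsPolynomialFiltration

end Filtration

/-! ### Equivariant transport of filtrations -/

section Equivariant

open LieModule Module

variable {K L X σ : Type*} [Field K] [LieRing L] [LieAlgebra K L]
  [AddCommGroup X] [Module K X] [LieRingModule L X] [LieModule K L X]

/-- The linear maps carrying the members of one family of Lie submodules into the corresponding
members of another, as a Lie submodule of `X →ₗ[K] X`. -/
def filteredHom {κ : Type*} (N N' : κ → LieSubmodule K L X) : LieSubmodule K L (X →ₗ[K] X) where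
  carrier := {f | ∀ i, ∀ u ∈ N i, f u ∈ N' i}
  add_mem' hf hg i u hu := add_mem (hf i u hu) (hg i u hu)
  zero_mem' _ _ _ := zero_mem _
  smul_mem' c _ hf i u hu := SMulMemClass.smul_mem c (hf i u hu)
  lie_mem {x f} hf i u hu := by
    change ⁅x, f⁆ u ∈ N' i
    rw [LieHom.lie_apply]
    exact sub_mem ((N' i).lie_mem (hf i u hu)) (hf i _ ((N i).lie_mem hu))

omit [LieAlgebra K L] [LieModule K L X] in
lemma exists_filtered_equiv_of_maximalFor [FiniteDimensional K X] {α κ : Type*}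
    {F : α → κ → LieSubmodule K L X} {a b : α}
    (ha : MaximalFor (fun _ => True) (fun a i => finrank K (F a i)) a)
    (T : X →ₗ⁅K,L⁆ X) (hT : ∀ i, (F a i).map T ≤ F b i) (hdet : LinearMap.det (T : End K X) ≠ 0) :
    ∃ φ : X ≃ₗ⁅K,L⁆ X, ∀ i, (F a i).map φ.toLieModuleHom = F b i := by
  let e : X ≃ₗ[K] X := LinearMap.equivOfDetNeZero (T : End K X) hdet
  let φ : X ≃ₗ⁅K,L⁆ X := { T, e with }
  have finrank_map (i) : finrank K ((F a i).map φ.toLieModuleHom) = finrank K (F a i) :=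
    e.finrank_map_eq (F a i).toSubmodule
  refine ⟨φ, fun i => ?_⟩
  rw [← LieSubmodule.toSubmodule_inj]
  refine Submodule.eq_of_le_of_finrank_le (hT i) ?_
  exact (ha.2 trivial (fun j => (finrank_map j).ge.trans (Submodule.finrank_mono (hT j))) i).trans
    (finrank_map i).ge

variable [CharZero K] [LieAlgebra.IsSemisimple K L] [FiniteDimensional K X]
  {F : (σ → K) → ℕ → LieSubmodule K L X}

lemma IsPolynomialFiltration.exists_equivariant_transport
    (hF : IsPolynomialFiltration fun z i => (F z i).toSubmodule) (z₀ : σ → K) :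
    ∃ T : (σ → K) → X →ₗ⁅K,L⁆ X, (fun z => (T z : End K X)) ∈ polynomialFamily K σ (End K X) ∧
      (T z₀ : End K X) = 1 ∧ ∀ z i, (F z₀ i).map (T z) ≤ F z i := by
  obtain ⟨T, hT, hTz₀, hTF⟩ := hF.exists_transport z₀
  have one_mem : (1 : End K X) ∈ maxTrivSubmodule K L (X →ₗ[K] X) := fun x => by ext; simp
  refine ⟨fun z => maxTrivLinearMapEquivLieModuleHom
    ⟨reynolds K L _ (T z), reynolds_mem_maxTrivSubmodule K L _⟩, ?_, ?_, fun z i => ?_⟩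
  · simpa using map_mem_polynomialFamily (reynolds K L (X →ₗ[K] X)) hT
  · simpa [hTz₀] using reynolds_eq_self K L one_mem
  · have : reynolds K L _ (T z) ∈ filteredHom (F z₀) (F z) := reynolds_mem K L (hTF z)
    rintro _ ⟨u, hu, rfl⟩
    exact this i u hu

theorem IsPolynomialFiltration.exists_generic_filtered_equiv
    (hF : IsPolynomialFiltration fun z i => (F z i).toSubmodule) :
    ∃ D : MvPolynomial σ K, D ≠ 0 ∧ ∀ z₁ z₂ : σ → K,
      MvPolynomial.eval z₁ D ≠ 0 → MvPolynomial.eval z₂ D ≠ 0 →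
      ∃ φ : X ≃ₗ⁅K,L⁆ X, ∀ i, (F z₁ i).map φ.toLieModuleHom = F z₂ i := by
  obtain ⟨z₀, hz₀⟩ := exists_maximalFor_finrank hF.mono
  obtain ⟨T, hT, hTz₀, hTF⟩ := hF.exists_equivariant_transport z₀
  obtain ⟨D, hD⟩ := exists_eval_eq_det hT
  have from_z₀ (z : σ → K) (hz : MvPolynomial.eval z D ≠ 0) :
      ∃ φ : X ≃ₗ⁅K,L⁆ X, ∀ i, (F z₀ i).map φ.toLieModuleHom = F z i :=
    exists_filtered_equiv_of_maximalFor hz₀ (T z) (hTF z) (hD z ▸ hz)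
  refine ⟨D, fun h => ?_, fun z₁ z₂ hz₁ hz₂ => ?_⟩
  · simpa [h, hTz₀] using hD z₀
  · obtain ⟨φ₁, hφ₁⟩ := from_z₀ z₁ hz₁
    obtain ⟨φ₂, hφ₂⟩ := from_z₀ z₂ hz₂
    refine ⟨φ₁.symm.trans φ₂, fun i => ?_⟩
    rw [← hφ₁ i, ← hφ₂ i]
    ext u
    simp

end Equivariant

/-! ### Filtered tensor products -/

section TensorProduct

variable {ι : Type} [DecidableEq ι]
  {π : ι → Type} [∀ i, AddCommGroup (π i)] [∀ i, Module ℂ (π i)]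

section PolynomialSections

variable [Fintype ι] {L : Type}

lemma IsWord.exists_section {ρ : ∀ i, L → Module.End ℂ (π i)} {v : ∀ i, π i} {z₀ : ι → ℂ}
    {u : ⨂[ℂ] i, π i} {d : ℕ} (hu : IsWord π ρ v z₀ u d) :
    ∃ s ∈ polynomialFamily ℂ ι (⨂[ℂ] i, π i), (∀ z, IsWord π ρ v z (s z) d) ∧ s z₀ = u := by
  induction hu with
  | base => exact ⟨_, const_mem_polynomialFamily (tprod ℂ v), fun _ => .base, rfl⟩
  | step x k _ ih =>
    obtain ⟨s, hs, hword, rfl⟩ := ih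
    refine ⟨fun z => monAct π ρ z k x (s z), ?_, fun z => (hword z).step x k, rfl⟩
    have monAct_eq : (fun z => monAct π ρ z k x (s z)) =
        ∑ i, fun z => MvPolynomial.eval z (MvPolynomial.X i ^ k) • slotE π i (ρ i x) (s z) := by
      ext z
      simp [monAct]
    rw [monAct_eq]
    exact sum_mem fun i _ =>
      eval_smul_apply_mem_polynomialFamily _ (map_mem_polynomialFamily (slotE π i (ρ i x)) hs)

theorem isPolynomialFiltration_F (ρ : ∀ i, L → Module.End ℂ (π i)) (v : ∀ i, π i) :
    IsPolynomialFiltration (F π ρ v) where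
  mono z _ _ hij := F_mono π ρ v z hij
  exists_section z₀ i u hu := by
    let sections : Submodule ℂ ((ι → ℂ) → ⨂[ℂ] i, π i) :=
      polynomialFamily ℂ ι _ ⊓ Submodule.pi Set.univ fun z => F π ρ v z i
    suffices F π ρ v z₀ i ≤ sections.map (LinearMap.proj z₀) by
      obtain ⟨s, ⟨hs, hsF⟩, hsu⟩ := this hu
      exact ⟨s, hs, fun z => hsF z trivial, hsu⟩
    refine Submodule.span_le.2 ?_
    rintro u ⟨d, hd, hu⟩
    obtain ⟨s, hs, hword, hsu⟩ := hu.exists_section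
    exact ⟨s, ⟨hs, fun z _ => Submodule.subset_span ⟨d, hd, hword z⟩⟩, hsu⟩

end PolynomialSections

section DiagonalAction

variable (π)

lemma slotE_add (i : ι) (g h : Module.End ℂ (π i)) :
    slotE π i (g + h) = slotE π i g + slotE π i h :=
  PiTensorProduct.map_update_add _ _ _ _

lemma slotE_smul (i : ι) (c : ℂ) (g : Module.End ℂ (π i)) :
    slotE π i (c • g) = c • slotE π i g :=
  PiTensorProduct.map_update_smul _ _ _ _

lemma slotE_mul (i : ι) (g h : Module.End ℂ (π i)) :
    slotE π i (g * h) = slotE π i g * slotE π i h := by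
  rw [slotE, slotE, slotE, ← PiTensorProduct.map_mul]
  congr 1
  ext j : 1
  obtain rfl | hj := eq_or_ne j i <;> simp [*, Module.End.mul_eq_comp]

lemma commute_slotE {i j : ι} (hij : i ≠ j) (g : Module.End ℂ (π i)) (h : Module.End ℂ (π j)) :
    Commute (slotE π i g) (slotE π j h) := by
  rw [commute_iff_eq, slotE, slotE, ← PiTensorProduct.map_mul, ← PiTensorProduct.map_mul]
  congr 1
  ext k : 1
  obtain rfl | hki := eq_or_ne k i
  · simp [hij, Module.End.mul_eq_comp]
  · obtain rfl | hkj := eq_or_ne k j <;> simp [*, Module.End.mul_eq_comp]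

lemma slotE_lie (i : ι) (g h : Module.End ℂ (π i)) :
    slotE π i ⁅g, h⁆ = ⁅slotE π i g, slotE π i h⁆ := by
  rw [Ring.lie_def, Ring.lie_def, ← slotE_mul, ← slotE_mul, eq_sub_iff_add_eq, ← slotE_add,
    sub_add_cancel]

attribute [local instance] LieRing.ofAssociativeRing

variable [Fintype ι] {L : Type} [LieRing L] [LieAlgebra ℂ L]
  [∀ i, LieRingModule L (π i)] [∀ i, LieModule ℂ L (π i)]

variable (L) in
/-- The diagonal action of `L` on `⨂ π i`, with `x` acting as `∑ i, 1 ⊗ ⋯ ⊗ x ⊗ ⋯ ⊗ 1`. -/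
noncomputable def diagonalAction : L →ₗ⁅ℂ⁆ Module.End ℂ (⨂[ℂ] i, π i) where
  toFun x := ∑ i, slotE π i (LieModule.toEnd ℂ L (π i) x)
  map_add' x y := by simp only [map_add, slotE_add, Finset.sum_add_distrib]
  map_smul' c x := by simp only [map_smul, slotE_smul, Finset.smul_sum, RingHom.id_apply]
  map_lie' {x y} := by
    rw [sum_lie_sum]
    refine Finset.sum_congr rfl fun i _ => ?_
    rw [Finset.sum_eq_single_of_mem i (Finset.mem_univ i), LieHom.map_lie, slotE_lie]
    exact fun j _ hji => commute_iff_lie_eq.1 (commute_slotE π hji.symm _ _)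

/-- The tensor product of finitely many Lie modules, with the diagonal action. -/
noncomputable instance : LieRingModule L (⨂[ℂ] i, π i) :=
  LieRingModule.compLieHom _ (diagonalAction π L)

noncomputable instance : LieModule ℂ L (⨂[ℂ] i, π i) :=
  LieModule.compLieHom _ (diagonalAction π L)

lemma lie_eq_sum_slotE (x : L) (u : ⨂[ℂ] i, π i) :
    ⁅x, u⁆ = (∑ i, slotE π i (LieModule.toEnd ℂ L (π i) x)) u := rfl

variable {π}

variable (L) in
/-- The filtration `F` of the tensor product of Lie modules `π i`, as a filtration by Lie
submodules for the diagonal action. -/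
noncomputable def lieF (v : ∀ i, π i) (z : ι → ℂ) (i : ℕ) : LieSubmodule ℂ L (⨂[ℂ] i, π i) where
  __ := F π (fun i x => LieModule.toEnd ℂ L (π i) x) v z i
  lie_mem {x u} hu := by
    simpa [monAct, lie_eq_sum_slotE] using
      monAct_mem_F π (fun i (x : L) => LieModule.toEnd ℂ L (π i) x) v 0 x hu

end DiagonalAction

end TensorProduct

end Fusion

open Fusion in
theorem filtered_tensor_product_generic_independence_general
    {L : Type} [LieRing L] [LieAlgebra ℂ L] [LieAlgebra.IsSemisimple ℂ L]
    {ι : Type} [Fintype ι] [DecidableEq ι] (π : ι → Type)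
    [∀ i, AddCommGroup (π i)] [∀ i, Module ℂ (π i)]
    [∀ i, LieRingModule L (π i)] [∀ i, LieModule ℂ L (π i)]
    [∀ i, FiniteDimensional ℂ (π i)] (v : ∀ i, π i) :
    ∃ D : MvPolynomial ι ℂ, D ≠ 0 ∧
      ∀ z₁ z₂ : ι → ℂ, MvPolynomial.eval z₁ D ≠ 0 → MvPolynomial.eval z₂ D ≠ 0 →
        ∃ φ : (⨂[ℂ] i, π i) ≃ₗ[ℂ] ⨂[ℂ] i, π i,
          (∀ (x : L) (u : ⨂[ℂ] i, π i),
            φ ((∑ i, slotE π i (LieModule.toEnd ℂ L (π i) x)) u) =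
              (∑ i, slotE π i (LieModule.toEnd ℂ L (π i) x)) (φ u)) ∧
          ∀ i : ℕ,
            Submodule.map (φ : (⨂[ℂ] i, π i) →ₗ[ℂ] ⨂[ℂ] i, π i)
              (F π (fun i x => LieModule.toEnd ℂ L (π i) x) v z₁ i) =
            F π (fun i x => LieModule.toEnd ℂ L (π i) x) v z₂ i := by
  obtain ⟨D, hD, h⟩ := IsPolynomialFiltration.exists_generic_filtered_equiv (F := lieF L v)
    (isPolynomialFiltration_F _ v)
  refine ⟨D, hD, fun z₁ z₂ hz₁ hz₂ => ?_⟩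
  obtain ⟨φ, hφ⟩ := h z₁ z₂ hz₁ hz₂
  exact ⟨φ.toLinearEquiv, φ.toLieModuleHom.map_lie,
    fun i => congrArg LieSubmodule.toSubmodule (hφ i)⟩

open Fusion in
/-- For a simple Lie algebra `𝔤` and cyclic finite-dimensional `𝔤`-modules,
there is a nonempty Zariski open subset of `ℂⁿ∖Δ` (the complement of the zero locus of a nonzero
polynomial `D`) over which the filtered tensor products are all isomorphic as filtered
`𝔤`-modules. -/
theorem filtered_tensor_product_generic_independence
    {L : Type} [LieRing L] [LieAlgebra ℂ L] [LieAlgebra.IsSimple ℂ L]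
    [FiniteDimensional ℂ L]
    (n : ℕ) (π : Fin n → Type) [∀ i, AddCommGroup (π i)] [∀ i, Module ℂ (π i)]
    [∀ i, LieRingModule L (π i)] [∀ i, LieModule ℂ L (π i)]
    [∀ i, FiniteDimensional ℂ (π i)]
    (v : ∀ i, π i)
    (hcyc : ∀ i, ∀ N : LieSubmodule ℂ L (π i), v i ∈ N → N = ⊤) :
    ∃ D : MvPolynomial (Fin n) ℂ, D ≠ 0 ∧
      ∀ z₁ z₂ : Fin n → ℂ, Function.Injective z₁ → Function.Injective z₂ →
        MvPolynomial.eval z₁ D ≠ 0 → MvPolynomial.eval z₂ D ≠ 0 →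
        ∃ φ : (⨂[ℂ] i, π i) ≃ₗ[ℂ] ⨂[ℂ] i, π i,
          (∀ (x : L) (u : ⨂[ℂ] i, π i),
            φ ((∑ i, slotE π i (LieModule.toEnd ℂ L (π i) x)) u) =
              (∑ i, slotE π i (LieModule.toEnd ℂ L (π i) x)) (φ u)) ∧
          (∀ i : ℕ,
            Submodule.map (φ : (⨂[ℂ] i, π i) →ₗ[ℂ] ⨂[ℂ] i, π i)
              (F π (fun i x => LieModule.toEnd ℂ L (π i) x) v z₁ i) =
            F π (fun i x => LieModule.toEnd ℂ L (π i) x) v z₂ i) := by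
  obtain ⟨D, hD, h⟩ := filtered_tensor_product_generic_independence_general (L := L) π v
  exact ⟨D, hD, fun z₁ z₂ _ _ => h z₁ z₂⟩
end

section
/- Let 𝔲 ⊂ sl₂[t] be the Lie subalgebra spanned by the elements tⁱ⊗e and tⁱ⊗h for i ≥ 0 and tʲ⊗f for j ≥ 1, and let S be a finite-dimensional 𝔲-module on which 1⊗h acts diagonalizably. Then there exist a finite-dimensional sl₂[t]-module M and a 𝔲-equivariant linear map η : S → M with the following universal property: for every finite-dimensional sl₂[t]-module N and every 𝔲-equivariant linear map g : S → N there is a unique sl₂[t]-equivariant linear map φ : M → N with φ∘η = g. (Equivalently: the maximal finite-dimensional quotient Ind_fin(𝔲; S; sl₂[t]) of the induced sl₂[t]-module is finite-dimensional.) -/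
/-- A bundled `sl₂[t]`-module, given by the operators `E k`, `H k`, `F k` by which the
elements `t^k ⊗ e`, `t^k ⊗ h`, `t^k ⊗ f` act, subject to the commutation relations of the
current algebra `sl₂[t]`. -/
structure Sl2tMod where
  carrier : Type
  [acg : AddCommGroup carrier]
  [mod : Module ℂ carrier]
  E : ℕ → Module.End ℂ carrier
  H : ℕ → Module.End ℂ carrier
  F : ℕ → Module.End ℂ carrier
  rel_he : ∀ i j, H i * E j - E j * H i = (2 : ℂ) • E (i + j)
  rel_hf : ∀ i j, H i * F j - F j * H i = (-2 : ℂ) • F (i + j)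
  rel_ef : ∀ i j, E i * F j - F j * E i = H (i + j)
  rel_hh : ∀ i j, H i * H j = H j * H i
  rel_ee : ∀ i j, E i * E j = E j * E i
  rel_ff : ∀ i j, F i * F j = F j * F i

attribute [instance] Sl2tMod.acg Sl2tMod.mod

/-! A universal pair `(M, η)` is a pair generated by `S` of maximal dimension: for any other
equivariant `g : S → N`, the submodule of `M × N` generated by the image of `(η, g)` projects onto
`M`, hence isomorphically by maximality, and so is the graph of the required map `M → N`.

The maximum exists because generated pairs have bounded dimension. Any such `N` is spanned by the
subspaces `F₀ᵏ(g(S))`, so the weights of `h = 1 ⊗ h` on `N` have real part at most `K`, where `K`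
bounds the real parts of the weights on `S`. By the representation theory of `sl₂` they then have
real part at least `-K`, and since `F₀` lowers weights by `2`, `F₀ᴷ⁺¹ = 0`. Hence
`dim N ≤ (K + 1) dim S`. -/

open Module

attribute [local instance] LieRing.ofAssociativeRing

section OrbitSpan

variable {R V : Type*} [CommRing R] [AddCommGroup V] [Module R V]

/-- The smallest `A`-invariant submodule containing `W`, that is, the `R[A]`-span of `W`. -/
def orbitSpan (A : End R V) (W : Submodule R V) : Submodule R V :=
  ⨆ k : ℕ, W.map (A ^ k)

variable {A : End R V} {W : Submodule R V}

lemma le_orbitSpan : W ≤ orbitSpan A W :=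
  le_iSup_of_le 0 (by simp [End.one_eq_id])

lemma orbitSpan_le_comap : orbitSpan A W ≤ (orbitSpan A W).comap A := by
  refine iSup_le fun k => ?_
  rw [← Submodule.map_le_iff_le_comap, ← Submodule.map_comp, ← End.mul_eq_comp, ← pow_succ']
  exact le_iSup (fun k : ℕ => W.map (A ^ k)) (k + 1)

lemma orbitSpan_le {P : Submodule R V} (hW : W ≤ P) (hA : P ≤ P.comap A) : orbitSpan A W ≤ P :=
  iSup_le fun k => Submodule.map_le_iff_le_comap.2 <| hW.trans fun x hx => by
    induction k with
    | zero => exact hx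
    | succ k ih => simpa only [pow_succ', Submodule.mem_comap, End.mul_apply] using hA ih

lemma map_orbitSpan {V' : Type*} [AddCommGroup V'] [Module R V'] {B : End R V'} {f : V →ₗ[R] V'}
    (hf : f ∘ₗ A = B ∘ₗ f) : (orbitSpan A W).map f = orbitSpan B (W.map f) := by
  have hpow (k : ℕ) : f ∘ₗ (A ^ k) = (B ^ k) ∘ₗ f :=
    (End.commute_pow_left_of_commute hf.symm k).symm
  simp only [orbitSpan, Submodule.map_iSup, ← Submodule.map_comp, hpow]

end OrbitSpan

section Finrank

variable {K V : Type*} [Field K] [AddCommGroup V] [Module K V] [FiniteDimensional K V]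

lemma finrank_finset_sup_le_sum {ι : Type*} (s : Finset ι) (W : ι → Submodule K V) :
    finrank K (s.sup W : Submodule K V) ≤ ∑ i ∈ s, finrank K (W i) := by
  classical
  induction s using Finset.induction_on with
  | empty => simp
  | insert i s hi ih =>
    rw [Finset.sup_insert, Finset.sum_insert hi]
    exact (Submodule.finrank_add_le_finrank_add_finrank _ _).trans (by gcongr)

lemma finrank_orbitSpan_le {A : End K V} {n : ℕ} (hA : A ^ n = 0) (W : Submodule K V) :
    finrank K (orbitSpan A W) ≤ n * finrank K W := by
  have hsup : orbitSpan A W ≤ (Finset.range n).sup fun k => W.map (A ^ k) := by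
    refine iSup_le fun k => ?_
    rcases lt_or_ge k n with hk | hk
    · exact Finset.le_sup (f := fun k => W.map (A ^ k)) (Finset.mem_range.2 hk)
    · simp [pow_eq_zero_of_le hk hA]
  calc finrank K (orbitSpan A W)
      ≤ finrank K ((Finset.range n).sup fun k => W.map (A ^ k) : Submodule K V) :=
        Submodule.finrank_mono hsup
    _ ≤ ∑ k ∈ Finset.range n, finrank K (W.map (A ^ k)) := finrank_finset_sup_le_sum _ _
    _ ≤ ∑ _k ∈ Finset.range n, finrank K W :=
        Finset.sum_le_sum fun _ _ => Submodule.finrank_map_le _ _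
    _ = n * finrank K W := by simp

end Finrank

section ReLEEigenspace

variable {V : Type*} [AddCommGroup V] [Module ℂ V]

/-- The sum of the generalized eigenspaces of `H` for the eigenvalues of real part at most `c`. -/
def reLEEigenspace (H : End ℂ V) (c : ℝ) : Submodule ℂ V :=
  ⨆ μ : ℂ, ⨆ _ : μ.re ≤ c, H.maxGenEigenspace μ

lemma maxGenEigenspace_le_reLEEigenspace (H : End ℂ V) {μ : ℂ} {c : ℝ} (hμ : μ.re ≤ c) :
    H.maxGenEigenspace μ ≤ reLEEigenspace H c :=
  le_iSup₂_of_le μ hμ le_rfl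

lemma reLEEigenspace_mono (H : End ℂ V) : Monotone (reLEEigenspace H) := fun _ _ hcd =>
  iSup₂_le fun _ hμ => maxGenEigenspace_le_reLEEigenspace H (hμ.trans hcd)

lemma maxGenEigenspace_ne_bot_iff_hasEigenvalue {H : End ℂ V} {μ : ℂ} :
    H.maxGenEigenspace μ ≠ ⊥ ↔ H.HasEigenvalue μ :=
  End.hasUnifEigenvalue_iff_hasUnifEigenvalue_one ENat.top_pos

lemma reLEEigenspace_eq_bot {H : End ℂ V} {c : ℝ} (h : ∀ μ, H.HasEigenvalue μ → c < μ.re) :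
    reLEEigenspace H c = ⊥ := by
  simp only [reLEEigenspace, iSup_eq_bot]
  intro μ hμ
  by_contra hne
  exact (h μ (maxGenEigenspace_ne_bot_iff_hasEigenvalue.1 hne)).not_ge hμ

lemma reLEEigenspace_eq_top_iff [FiniteDimensional ℂ V] {H : End ℂ V} {c : ℝ} :
    reLEEigenspace H c = ⊤ ↔ ∀ μ, H.HasEigenvalue μ → μ.re ≤ c := by
  refine ⟨fun htop μ hμ => ?_, fun h => ?_⟩
  · by_contra hlt
    have hne (ν : ℂ) (hν : ν.re ≤ c) : ν ≠ μ :=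
      ne_of_apply_ne Complex.re fun h => hlt (h.symm.trans_le hν)
    have hle : reLEEigenspace H c ≤ ⨆ ν, ⨆ _ : ν ≠ μ, H.maxGenEigenspace ν :=
      iSup_mono fun ν => iSup_mono' fun hν => ⟨hne ν hν, le_rfl⟩
    have hdisj := (H.independent_maxGenEigenspace μ).mono_right hle
    rw [htop, disjoint_top] at hdisj
    exact maxGenEigenspace_ne_bot_iff_hasEigenvalue.2 hμ hdisj
  · rw [eq_top_iff, ← End.iSup_maxGenEigenspace_eq_top H]
    refine iSup_le fun μ => ?_
    by_cases hμ : H.HasEigenvalue μ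
    · exact maxGenEigenspace_le_reLEEigenspace H (h μ hμ)
    · rw [not_ne_iff.1 (maxGenEigenspace_ne_bot_iff_hasEigenvalue.not.2 hμ)]
      exact bot_le

lemma maxGenEigenspace_le_comap {R V W : Type*} [CommRing R] [AddCommGroup V] [Module R V]
    [AddCommGroup W] [Module R W] {A : End R V} {B : End R W} {g : V →ₗ[R] W}
    (hg : ∀ v, g (A v) = B (g v)) (μ : R) :
    A.maxGenEigenspace μ ≤ (B.maxGenEigenspace μ).comap g := by
  have hcomm : (B - μ • 1) ∘ₗ g = g ∘ₗ (A - μ • 1) := LinearMap.ext fun v => by simp [hg]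
  intro v hv
  rw [Submodule.mem_comap, End.mem_maxGenEigenspace]
  rw [End.mem_maxGenEigenspace] at hv
  obtain ⟨k, hk⟩ := hv
  have hpow := LinearMap.congr_fun (End.commute_pow_left_of_commute hcomm k) v
  exact ⟨k, by rw [← LinearMap.comp_apply, hpow, LinearMap.comp_apply, hk, map_zero]⟩

lemma reLEEigenspace_le_comap {W : Type*} [AddCommGroup W] [Module ℂ W] {A : End ℂ V}
    {B : End ℂ W} {g : V →ₗ[ℂ] W} (hg : ∀ v, g (A v) = B (g v)) (c : ℝ) :
    reLEEigenspace A c ≤ (reLEEigenspace B c).comap g :=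
  iSup₂_le fun μ hμ => (maxGenEigenspace_le_comap hg μ).trans <|
    Submodule.comap_mono (maxGenEigenspace_le_reLEEigenspace B hμ)

lemma maxGenEigenspace_le_comap_of_lie_eq_smul {R V : Type*} [CommRing R] [AddCommGroup V]
    [Module R V] {H F : End R V} {a : R} (hHF : ⁅H, F⁆ = a • F) (μ : R) :
    H.maxGenEigenspace μ ≤ (H.maxGenEigenspace (a + μ)).comap F := by
  have hF : F ∈ (LieModule.toEnd R (End R V) (End R V) H).maxGenEigenspace a :=
    End.eigenspace_le_maxGenEigenspace (End.mem_eigenspace_iff.2 hHF)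
  exact fun v hv => LieModule.lie_mem_maxGenEigenspace_toEnd (L := End R V) hF hv

lemma reLEEigenspace_le_comap_of_lie_eq_smul {H F : End ℂ V} {a : ℂ} (hHF : ⁅H, F⁆ = a • F)
    (c : ℝ) : reLEEigenspace H c ≤ (reLEEigenspace H (a.re + c)).comap F :=
  iSup₂_le fun μ hμ => (maxGenEigenspace_le_comap_of_lie_eq_smul hHF μ).trans <|
    Submodule.comap_mono <| maxGenEigenspace_le_reLEEigenspace H <| by
      rw [Complex.add_re]
      gcongr

lemma reLEEigenspace_le_comap_pow_of_lie_eq_smul {H F : End ℂ V} {a : ℂ} (hHF : ⁅H, F⁆ = a • F)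
    (c : ℝ) (k : ℕ) : reLEEigenspace H c ≤ (reLEEigenspace H (k * a.re + c)).comap (F ^ k) := by
  induction k with
  | zero => simp [End.one_eq_id]
  | succ k ih =>
    intro v hv
    have hFv := reLEEigenspace_le_comap_of_lie_eq_smul hHF _ (ih hv)
    rw [Submodule.mem_comap] at hFv
    rw [Submodule.mem_comap, pow_succ', End.mul_apply]
    convert hFv using 2
    push_cast
    ring

end ReLEEigenspace

section Sl2Weights

open LieModule

lemma hasEigenvalue_neg_of_hasPrimitiveVectorWith {R L V : Type*} [CommRing R] [LieRing L]
    [LieAlgebra R L] [AddCommGroup V] [Module R V] [LieRingModule L V] [LieModule R L V]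
    [IsNoetherian R V] [IsTorsionFree R V] [IsDomain R] [CharZero R] {h e f : L}
    {t : IsSl2Triple h e f} {v : V} {μ : R} (hv : t.HasPrimitiveVectorWith v μ) :
    (toEnd R L V h).HasEigenvalue (-μ) := by
  obtain ⟨n, hn⟩ := hv.exists_nat
  refine End.hasEigenvalue_of_hasEigenvector (x := (toEnd R L V f ^ n) v)
    ⟨End.mem_eigenspace_iff.2 ?_, hv.pow_toEnd_f_ne_zero_of_eq_nat hn le_rfl⟩
  rw [toEnd_apply_apply, hv.lie_h_pow_toEnd_f, hn]
  congr 1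
  ring

lemma neg_le_re_of_hasEigenvalue_of_isSl2Triple {L V : Type*} [LieRing L] [LieAlgebra ℂ L]
    [AddCommGroup V] [Module ℂ V] [LieRingModule L V] [LieModule ℂ L V] [FiniteDimensional ℂ V]
    {h e f : L} (t : IsSl2Triple h e f) {c : ℝ}
    (hc : ∀ μ, (toEnd ℂ L V h).HasEigenvalue μ → μ.re ≤ c) {μ : ℂ}
    (hμ : (toEnd ℂ L V h).HasEigenvalue μ) : -c ≤ μ.re := by
  obtain ⟨ν, hν, hmin⟩ :=
    Set.exists_min_image _ Complex.re (toEnd ℂ L V h).finite_hasEigenvalue ⟨μ, hμ⟩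
  obtain ⟨w, hw⟩ := End.HasEigenvalue.exists_hasEigenvector hν
  have hhw : ⁅h, w⁆ = ν • w := hw.apply_eq_smul
  have hfw : ⁅f, w⁆ = 0 := by
    by_contra hne
    have hhfw : ⁅h, ⁅f, w⁆⁆ = (ν - 2) • ⁅f, w⁆ := by
      rw [leibniz_lie, t.lie_lie_smul_f ℂ, hhw, lie_smul, neg_lie, smul_lie]
      module
    have hmem : (toEnd ℂ L V h).HasEigenvalue (ν - 2) :=
      End.hasEigenvalue_of_hasEigenvector ⟨End.mem_eigenspace_iff.2 hhfw, hne⟩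
    have hle := hmin _ hmem
    norm_num at hle
  have hlowest : t.symm.HasPrimitiveVectorWith w (-ν) :=
    ⟨hw.2, by rw [neg_lie, hhw, neg_smul], hfw⟩
  have hneg := hasEigenvalue_neg_of_hasPrimitiveVectorWith hlowest
  rw [map_neg, End.hasEigenvalue_neg_iff, neg_neg] at hneg
  have hνc := hc _ hneg
  rw [Complex.neg_re] at hνc
  linarith [hmin μ hμ]

end Sl2Weights

namespace Sl2tMod

variable {M N : Sl2tMod}

section Relations

variable (N) (i j : ℕ) (x : N.carrier)

lemma H_F_apply : N.H i (N.F j x) = N.F j (N.H i x) + (-2 : ℂ) • N.F (i + j) x :=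
  sub_eq_iff_eq_add'.1 (LinearMap.congr_fun (N.rel_hf i j) x)

lemma E_F_apply : N.E i (N.F j x) = N.F j (N.E i x) + N.H (i + j) x :=
  sub_eq_iff_eq_add'.1 (LinearMap.congr_fun (N.rel_ef i j) x)

lemma F_F_apply : N.F i (N.F j x) = N.F j (N.F i x) :=
  LinearMap.congr_fun (N.rel_ff i j) x

end Relations

lemma isSl2Triple (N : Sl2tMod) (hH : N.H 0 ≠ 0) : IsSl2Triple (N.H 0) (N.E 0) (N.F 0) where
  h_ne_zero := hH
  lie_e_f := N.rel_ef 0 0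
  lie_h_e_nsmul := (N.rel_he 0 0).trans (ofNat_smul_eq_nsmul ℂ 2 _)
  lie_h_f_nsmul := (N.rel_hf 0 0).trans <| by rw [neg_smul, ofNat_smul_eq_nsmul]

lemma neg_le_re_of_hasEigenvalue (N : Sl2tMod) [FiniteDimensional ℂ N.carrier] {c : ℝ}
    (hc : ∀ μ, (N.H 0).HasEigenvalue μ → μ.re ≤ c) {μ : ℂ} (hμ : (N.H 0).HasEigenvalue μ) :
    -c ≤ μ.re := by
  by_cases hH : N.H 0 = 0
  · obtain ⟨v, hv⟩ := hμ.exists_hasEigenvector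
    have hμ0 : μ = 0 := by simpa [hH, hv.2] using hv.apply_eq_smul.symm
    have hμc := hc μ hμ
    simp only [hμ0, Complex.zero_re] at hμc ⊢
    linarith
  · exact neg_le_re_of_hasEigenvalue_of_isSl2Triple (V := N.carrier) (N.isSl2Triple hH) hc hμ

lemma F_zero_pow_eq_zero (N : Sl2tMod) [FiniteDimensional ℂ N.carrier] {K : ℕ}
    (hK : ∀ μ, (N.H 0).HasEigenvalue μ → μ.re ≤ K) : N.F 0 ^ (K + 1) = 0 := by
  have hbot : reLEEigenspace (N.H 0) ((K + 1 : ℕ) * (-2 : ℂ).re + K) = ⊥ :=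
    reLEEigenspace_eq_bot fun μ hμ => by
      have hneg := N.neg_le_re_of_hasEigenvalue hK hμ
      norm_num
      linarith
  have hlower :=
    reLEEigenspace_le_comap_pow_of_lie_eq_smul (N.rel_hf 0 0) (K : ℝ) (K + 1)
  rw [reLEEigenspace_eq_top_iff.2 hK, hbot, Submodule.comap_bot, top_le_iff] at hlower
  exact LinearMap.ker_eq_top.1 hlower

/-- Morphisms of `sl₂[t]`-modules. -/
def IsHom (φ : M.carrier →ₗ[ℂ] N.carrier) : Prop :=
  (∀ k, φ ∘ₗ M.E k = N.E k ∘ₗ φ) ∧ (∀ k, φ ∘ₗ M.H k = N.H k ∘ₗ φ) ∧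
    (∀ k, φ ∘ₗ M.F k = N.F k ∘ₗ φ)

lemma IsHom.comp {L : Sl2tMod} {ψ : M.carrier →ₗ[ℂ] N.carrier} {φ : L.carrier →ₗ[ℂ] M.carrier}
    (hψ : IsHom ψ) (hφ : IsHom φ) : IsHom (ψ ∘ₗ φ) := by
  have intertwines {A : End ℂ L.carrier} {B : End ℂ M.carrier} {C : End ℂ N.carrier}
      (hAB : φ ∘ₗ A = B ∘ₗ φ) (hBC : ψ ∘ₗ B = C ∘ₗ ψ) : (ψ ∘ₗ φ) ∘ₗ A = C ∘ₗ ψ ∘ₗ φ := by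
    rw [LinearMap.comp_assoc, hAB, ← LinearMap.comp_assoc, hBC, LinearMap.comp_assoc]
  exact ⟨fun k => intertwines (hφ.1 k) (hψ.1 k), fun k => intertwines (hφ.2.1 k) (hψ.2.1 k),
    fun k => intertwines (hφ.2.2 k) (hψ.2.2 k)⟩

lemma IsHom.of_comp_surjective {L : Sl2tMod} {π : L.carrier →ₗ[ℂ] M.carrier}
    {φ : M.carrier →ₗ[ℂ] N.carrier} (hπ : IsHom π) (hsurj : Function.Surjective π)
    (hφπ : IsHom (φ ∘ₗ π)) : IsHom φ := by
  have descend {A : End ℂ L.carrier} {B : End ℂ M.carrier} {C : End ℂ N.carrier}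
      (hAB : π ∘ₗ A = B ∘ₗ π) (hAC : (φ ∘ₗ π) ∘ₗ A = C ∘ₗ φ ∘ₗ π) : φ ∘ₗ B = C ∘ₗ φ := by
    rw [← LinearMap.cancel_right hsurj, LinearMap.comp_assoc, ← hAB, ← LinearMap.comp_assoc, hAC,
      LinearMap.comp_assoc]
  exact ⟨fun k => descend (hπ.1 k) (hφπ.1 k), fun k => descend (hπ.2.1 k) (hφπ.2.1 k),
    fun k => descend (hπ.2.2 k) (hφπ.2.2 k)⟩

/-- `sl₂[t]`-submodules: the subspaces stable under all operators `E k`, `H k` and `F k`. -/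
structure IsSubmodule (N : Sl2tMod) (P : Submodule ℂ N.carrier) : Prop where
  E_mem : ∀ k, ∀ x ∈ P, N.E k x ∈ P
  H_mem : ∀ k, ∀ x ∈ P, N.H k x ∈ P
  F_mem : ∀ k, ∀ x ∈ P, N.F k x ∈ P

/-- An `sl₂[t]`-submodule, as an `sl₂[t]`-module in its own right. -/
def restrict (N : Sl2tMod) {P : Submodule ℂ N.carrier} (hP : N.IsSubmodule P) : Sl2tMod where
  carrier := P
  E k := (N.E k).restrict (hP.E_mem k)
  H k := (N.H k).restrict (hP.H_mem k)
  F k := (N.F k).restrict (hP.F_mem k)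
  rel_he i j := LinearMap.ext fun x => Subtype.ext (LinearMap.congr_fun (N.rel_he i j) x.1)
  rel_hf i j := LinearMap.ext fun x => Subtype.ext (LinearMap.congr_fun (N.rel_hf i j) x.1)
  rel_ef i j := LinearMap.ext fun x => Subtype.ext (LinearMap.congr_fun (N.rel_ef i j) x.1)
  rel_hh i j := LinearMap.ext fun x => Subtype.ext (LinearMap.congr_fun (N.rel_hh i j) x.1)
  rel_ee i j := LinearMap.ext fun x => Subtype.ext (LinearMap.congr_fun (N.rel_ee i j) x.1)
  rel_ff i j := LinearMap.ext fun x => Subtype.ext (LinearMap.congr_fun (N.rel_ff i j) x.1)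

/-- The direct sum of two `sl₂[t]`-modules. -/
def prod (M N : Sl2tMod) : Sl2tMod where
  carrier := M.carrier × N.carrier
  E k := (M.E k).prodMap (N.E k)
  H k := (M.H k).prodMap (N.H k)
  F k := (M.F k).prodMap (N.F k)
  rel_he i j := LinearMap.ext fun x => Prod.ext
    (LinearMap.congr_fun (M.rel_he i j) x.1) (LinearMap.congr_fun (N.rel_he i j) x.2)
  rel_hf i j := LinearMap.ext fun x => Prod.ext
    (LinearMap.congr_fun (M.rel_hf i j) x.1) (LinearMap.congr_fun (N.rel_hf i j) x.2)
  rel_ef i j := LinearMap.ext fun x => Prod.ext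
    (LinearMap.congr_fun (M.rel_ef i j) x.1) (LinearMap.congr_fun (N.rel_ef i j) x.2)
  rel_hh i j := LinearMap.ext fun x => Prod.ext
    (LinearMap.congr_fun (M.rel_hh i j) x.1) (LinearMap.congr_fun (N.rel_hh i j) x.2)
  rel_ee i j := LinearMap.ext fun x => Prod.ext
    (LinearMap.congr_fun (M.rel_ee i j) x.1) (LinearMap.congr_fun (N.rel_ee i j) x.2)
  rel_ff i j := LinearMap.ext fun x => Prod.ext
    (LinearMap.congr_fun (M.rel_ff i j) x.1) (LinearMap.congr_fun (N.rel_ff i j) x.2)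

lemma isHom_fst : IsHom (M := M.prod N) (LinearMap.fst ℂ M.carrier N.carrier) :=
  ⟨fun _ => rfl, fun _ => rfl, fun _ => rfl⟩

lemma isHom_snd : IsHom (M := M.prod N) (LinearMap.snd ℂ M.carrier N.carrier) :=
  ⟨fun _ => rfl, fun _ => rfl, fun _ => rfl⟩

/-- The zero `sl₂[t]`-module. -/
def zero : Sl2tMod where
  carrier := PUnit
  E _ := 0
  H _ := 0
  F _ := 0
  rel_he _ _ := by simp
  rel_hf _ _ := by simp
  rel_ef _ _ := by simp
  rel_hh _ _ := rfl
  rel_ee _ _ := rfl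
  rel_ff _ _ := rfl

variable {S : Type*} [AddCommGroup S] [Module ℂ S]

/-- The `sl₂[t]`-module `N` is generated by the image of `g`. Only `F 0` is used to generate: the
image of an equivariant map out of a `𝔲`-module is already stable under the other operators. -/
def IsGeneratedBy (N : Sl2tMod) (g : S →ₗ[ℂ] N.carrier) : Prop :=
  orbitSpan (N.F 0) (LinearMap.range g) = ⊤

lemma IsGeneratedBy.hom_ext {η : S →ₗ[ℂ] M.carrier} (hη : M.IsGeneratedBy η)
    {φ ψ : M.carrier →ₗ[ℂ] N.carrier} (hφ : IsHom φ) (hψ : IsHom ψ) (h : φ ∘ₗ η = ψ ∘ₗ η) :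
    φ = ψ := by
  rw [← LinearMap.eqLocus_eq_top, ← top_le_iff, ← hη]
  refine orbitSpan_le ?_ fun x hx => ?_
  · rintro _ ⟨s, rfl⟩
    exact LinearMap.congr_fun h s
  · rw [LinearMap.mem_eqLocus] at hx
    rw [Submodule.mem_comap, LinearMap.mem_eqLocus, ← LinearMap.comp_apply,
      ← LinearMap.comp_apply, hφ.2.2, hψ.2.2, LinearMap.comp_apply, LinearMap.comp_apply, hx]

lemma IsGeneratedBy.surjective {η : S →ₗ[ℂ] M.carrier} (hη : M.IsGeneratedBy η)
    {g : S →ₗ[ℂ] N.carrier} {π : N.carrier →ₗ[ℂ] M.carrier} (hπ : IsHom π) (hπg : π ∘ₗ g = η) :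
    Function.Surjective π := by
  rw [← LinearMap.range_eq_top, ← top_le_iff, ← hη]
  refine orbitSpan_le ?_ ?_
  · rw [← hπg]
    exact LinearMap.range_comp_le_range g π
  · rintro _ ⟨y, rfl⟩
    exact ⟨N.F 0 y, LinearMap.congr_fun (hπ.2.2 0) y⟩

lemma IsGeneratedBy.finrank_le [FiniteDimensional ℂ S] [FiniteDimensional ℂ N.carrier]
    {g : S →ₗ[ℂ] N.carrier} (hg : N.IsGeneratedBy g) {n : ℕ} (hF : N.F 0 ^ n = 0) :
    finrank ℂ N.carrier ≤ n * finrank ℂ S :=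
  calc finrank ℂ N.carrier = finrank ℂ (orbitSpan (N.F 0) (LinearMap.range g)) := by
        rw [hg, finrank_top]
    _ ≤ n * finrank ℂ (LinearMap.range g) := finrank_orbitSpan_le hF _
    _ ≤ n * finrank ℂ S := by
        gcongr
        exact LinearMap.finrank_range_le g

end Sl2tMod

/-- Modules over the Iwahori subalgebra `𝔲` of `sl₂[t]`, spanned by `t^i ⊗ e`, `t^i ⊗ h` for
`i ≥ 0` and `t^j ⊗ f` for `j ≥ 1`, in the same encoding as `Sl2tMod`. The operator `F 0` has no
meaning and is unconstrained. -/
structure IwahoriMod where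
  carrier : Type
  [addCommGroup : AddCommGroup carrier]
  [module : Module ℂ carrier]
  E : ℕ → End ℂ carrier
  H : ℕ → End ℂ carrier
  F : ℕ → End ℂ carrier
  rel_he : ∀ i j, H i * E j - E j * H i = (2 : ℂ) • E (i + j)
  rel_hf : ∀ i j, 1 ≤ j → H i * F j - F j * H i = (-2 : ℂ) • F (i + j)
  rel_ef : ∀ i j, 1 ≤ j → E i * F j - F j * E i = H (i + j)
  rel_hh : ∀ i j, H i * H j = H j * H i
  rel_ee : ∀ i j, E i * E j = E j * E i
  rel_ff : ∀ i j, 1 ≤ i → 1 ≤ j → F i * F j = F j * F i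

attribute [instance] IwahoriMod.addCommGroup IwahoriMod.module

namespace IwahoriMod

open Sl2tMod

/-- `𝔲`-equivariance of a linear map from a `𝔲`-module to an `sl₂[t]`-module. -/
def IsEquivariant (S : IwahoriMod) {N : Sl2tMod} (g : S.carrier →ₗ[ℂ] N.carrier) : Prop :=
  (∀ i s, g (S.E i s) = N.E i (g s)) ∧ (∀ i s, g (S.H i s) = N.H i (g s)) ∧
    (∀ j, 1 ≤ j → ∀ s, g (S.F j s) = N.F j (g s))

variable {S : IwahoriMod} {M N : Sl2tMod} {η : S.carrier →ₗ[ℂ] M.carrier}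
  {g : S.carrier →ₗ[ℂ] N.carrier}

lemma IsEquivariant.prod (hη : S.IsEquivariant η) (hg : S.IsEquivariant g) :
    S.IsEquivariant (N := M.prod N) (η.prod g) :=
  ⟨fun i s => Prod.ext (hη.1 i s) (hg.1 i s), fun i s => Prod.ext (hη.2.1 i s) (hg.2.1 i s),
    fun j hj s => Prod.ext (hη.2.2 j hj s) (hg.2.2 j hj s)⟩

lemma IsEquivariant.isSubmodule_orbitSpan (hg : S.IsEquivariant g) :
    N.IsSubmodule (orbitSpan (N.F 0) (LinearMap.range g)) := by
  set P := orbitSpan (N.F 0) (LinearMap.range g)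
  have hgP (s) : g s ∈ P := le_orbitSpan ⟨s, rfl⟩
  have hF0 {x} (hx : x ∈ P) : N.F 0 x ∈ P := orbitSpan_le_comap hx
  have stable_of_mem_of_mem {A : End ℂ N.carrier} (hAg : ∀ s, A (g s) ∈ P)
      (hAF : ∀ x ∈ P, A x ∈ P → A (N.F 0 x) ∈ P) : ∀ x ∈ P, A x ∈ P := by
    have hle : P ≤ P ⊓ P.comap A := by
      refine orbitSpan_le ?_ fun x hx => ⟨hF0 hx.1, hAF x hx.1 hx.2⟩
      rintro _ ⟨s, rfl⟩
      exact ⟨hgP s, hAg s⟩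
    exact fun x hx => (hle hx).2
  have hF : ∀ k, ∀ x ∈ P, N.F k x ∈ P := by
    rintro (_ | k)
    · exact fun _ => hF0
    · refine stable_of_mem_of_mem (fun s => ?_) fun x _ hFx => ?_
      · exact hg.2.2 (k + 1) k.succ_pos s ▸ hgP _
      · exact N.F_F_apply (k + 1) 0 x ▸ hF0 hFx
  have hH : ∀ k, ∀ x ∈ P, N.H k x ∈ P := fun k =>
    stable_of_mem_of_mem (fun s => hg.2.1 k s ▸ hgP _) fun x hx hHx =>
      N.H_F_apply k 0 x ▸ P.add_mem (hF0 hHx) (P.smul_mem _ (hF _ x hx))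
  have hE : ∀ k, ∀ x ∈ P, N.E k x ∈ P := fun k =>
    stable_of_mem_of_mem (fun s => hg.1 k s ▸ hgP _) fun x hx hEx =>
      N.E_F_apply k 0 x ▸ P.add_mem (hF0 hEx) (hH _ x hx)
  exact ⟨hE, hH, hF⟩

lemma IsEquivariant.exists_isGeneratedBy [FiniteDimensional ℂ N.carrier]
    (hg : S.IsEquivariant g) :
    ∃ (P : Sl2tMod) (g' : S.carrier →ₗ[ℂ] P.carrier) (ι : P.carrier →ₗ[ℂ] N.carrier),
      FiniteDimensional ℂ P.carrier ∧ S.IsEquivariant g' ∧ P.IsGeneratedBy g' ∧ IsHom ι ∧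
        ι ∘ₗ g' = g := by
  let P := orbitSpan (N.F 0) (LinearMap.range g)
  let g' : S.carrier →ₗ[ℂ] P := g.codRestrict P fun s => le_orbitSpan ⟨s, rfl⟩
  have hgen : orbitSpan ((N.restrict hg.isSubmodule_orbitSpan).F 0) (LinearMap.range g') = ⊤ := by
    apply Submodule.map_injective_of_injective P.subtype_injective
    have hmap := map_orbitSpan (A := (N.F 0).restrict (hg.isSubmodule_orbitSpan.F_mem 0))
      (W := LinearMap.range g') (B := N.F 0) (f := P.subtype) rfl
    rw [← LinearMap.range_comp] at hmap
    exact hmap.trans (Submodule.map_subtype_top P).symm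
  exact ⟨N.restrict hg.isSubmodule_orbitSpan, g', P.subtype,
    inferInstanceAs (FiniteDimensional ℂ P),
    ⟨fun i s => Subtype.ext (hg.1 i s), fun i s => Subtype.ext (hg.2.1 i s),
      fun j hj s => Subtype.ext (hg.2.2 j hj s)⟩,
    hgen, ⟨fun _ => rfl, fun _ => rfl, fun _ => rfl⟩, rfl⟩

lemma IsEquivariant.re_le_of_hasEigenvalue [FiniteDimensional ℂ S.carrier]
    [FiniteDimensional ℂ N.carrier] (hg : S.IsEquivariant g) (hgen : N.IsGeneratedBy g) {c : ℝ}
    (hc : ∀ μ, (S.H 0).HasEigenvalue μ → μ.re ≤ c) {μ : ℂ} (hμ : (N.H 0).HasEigenvalue μ) :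
    μ.re ≤ c := by
  suffices htop : reLEEigenspace (N.H 0) c = ⊤ from reLEEigenspace_eq_top_iff.1 htop μ hμ
  rw [← top_le_iff, ← hgen]
  refine orbitSpan_le ?_ ?_
  · rw [LinearMap.range_eq_map, Submodule.map_le_iff_le_comap, ← reLEEigenspace_eq_top_iff.2 hc]
    exact reLEEigenspace_le_comap (hg.2.1 0) c
  · exact (reLEEigenspace_le_comap_of_lie_eq_smul (N.rel_hf 0 0) c).trans <|
      Submodule.comap_mono <| reLEEigenspace_mono _ (by norm_num)

lemma exists_finrank_le (S : IwahoriMod) [FiniteDimensional ℂ S.carrier] :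
    ∃ d : ℕ, ∀ (N : Sl2tMod) (g : S.carrier →ₗ[ℂ] N.carrier), FiniteDimensional ℂ N.carrier →
      S.IsEquivariant g → N.IsGeneratedBy g → finrank ℂ N.carrier ≤ d := by
  obtain ⟨b, hb⟩ := ((S.H 0).finite_hasEigenvalue.image Complex.re).bddAbove
  obtain ⟨K, hbK⟩ := exists_nat_ge b
  have hK (μ : ℂ) (hμ : (S.H 0).HasEigenvalue μ) : μ.re ≤ K := (hb ⟨μ, hμ, rfl⟩).trans hbK
  exact ⟨(K + 1) * finrank ℂ S.carrier, fun N g _ hg hgen =>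
    hgen.finrank_le (N.F_zero_pow_eq_zero fun _ => hg.re_le_of_hasEigenvalue hgen hK)⟩

lemma exists_isGeneratedBy_forall_finrank_le (S : IwahoriMod) [FiniteDimensional ℂ S.carrier] :
    ∃ (M : Sl2tMod) (η : S.carrier →ₗ[ℂ] M.carrier), FiniteDimensional ℂ M.carrier ∧
      S.IsEquivariant η ∧ M.IsGeneratedBy η ∧
      ∀ (N : Sl2tMod) (g : S.carrier →ₗ[ℂ] N.carrier), FiniteDimensional ℂ N.carrier →
        S.IsEquivariant g → N.IsGeneratedBy g → finrank ℂ N.carrier ≤ finrank ℂ M.carrier := by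
  let ranks : Set ℕ := {n | ∃ (N : Sl2tMod) (g : S.carrier →ₗ[ℂ] N.carrier),
    FiniteDimensional ℂ N.carrier ∧ S.IsEquivariant g ∧ N.IsGeneratedBy g ∧
      finrank ℂ N.carrier = n}
  have hzero : ranks.Nonempty :=
    ⟨_, Sl2tMod.zero, 0, inferInstanceAs (FiniteDimensional ℂ PUnit),
      ⟨fun _ _ => rfl, fun _ _ => rfl, fun _ _ _ => rfl⟩,
      eq_top_iff.2 fun _ _ => Submodule.zero_mem _, rfl⟩
  have hbdd : BddAbove ranks := by
    obtain ⟨d, hd⟩ := S.exists_finrank_le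
    exact ⟨d, by rintro _ ⟨N, g, hN, hg, hgen, rfl⟩; exact hd N g hN hg hgen⟩
  obtain ⟨_, ⟨M, η, hM, hη, hgen, rfl⟩, hmax⟩ := hbdd.exists_isGreatest_of_nonempty hzero
  exact ⟨M, η, hM, hη, hgen, fun N g hN hg hN' => hmax ⟨N, g, hN, hg, hN', rfl⟩⟩

lemma IsEquivariant.exists_isHom_comp_eq [FiniteDimensional ℂ M.carrier]
    [FiniteDimensional ℂ N.carrier] (hη : S.IsEquivariant η) (hgen : M.IsGeneratedBy η)
    (hmax : ∀ (P : Sl2tMod) (g : S.carrier →ₗ[ℂ] P.carrier), FiniteDimensional ℂ P.carrier →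
      S.IsEquivariant g → P.IsGeneratedBy g → finrank ℂ P.carrier ≤ finrank ℂ M.carrier)
    (hg : S.IsEquivariant g) :
    ∃ φ : M.carrier →ₗ[ℂ] N.carrier, IsHom φ ∧ φ ∘ₗ η = g := by
  have : FiniteDimensional ℂ (M.prod N).carrier :=
    inferInstanceAs (FiniteDimensional ℂ (M.carrier × N.carrier))
  obtain ⟨P, γ, ι, _, hγ, hPgen, hι, hιγ⟩ := (hη.prod hg).exists_isGeneratedBy
  let π : P.carrier →ₗ[ℂ] M.carrier := LinearMap.fst ℂ M.carrier N.carrier ∘ₗ ι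
  let ρ : P.carrier →ₗ[ℂ] N.carrier := LinearMap.snd ℂ M.carrier N.carrier ∘ₗ ι
  have hπ : IsHom π := isHom_fst.comp hι
  have hρ : IsHom ρ := isHom_snd.comp hι
  have hπγ : π ∘ₗ γ = η := LinearMap.ext fun s => congrArg Prod.fst (LinearMap.congr_fun hιγ s)
  have hργ : ρ ∘ₗ γ = g := LinearMap.ext fun s => congrArg Prod.snd (LinearMap.congr_fun hιγ s)
  have hsurj : Function.Surjective π := hgen.surjective hπ hπγ
  have hrank : finrank ℂ P.carrier = finrank ℂ M.carrier :=
    (hmax P γ ‹_› hγ hPgen).antisymm (LinearMap.finrank_le_finrank_of_surjective hsurj)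
  have hinj : Function.Injective π :=
    (LinearMap.injective_iff_surjective_of_finrank_eq_finrank hrank).2 hsurj
  let e : P.carrier ≃ₗ[ℂ] M.carrier := LinearEquiv.ofBijective π ⟨hinj, hsurj⟩
  have hφπ : (ρ ∘ₗ e.symm.toLinearMap) ∘ₗ π = ρ :=
    LinearMap.ext fun y => congrArg ρ (e.symm_apply_apply y)
  refine ⟨ρ ∘ₗ e.symm.toLinearMap, hπ.of_comp_surjective hsurj (by rwa [hφπ]), ?_⟩
  rw [← hπγ, ← LinearMap.comp_assoc, hφπ, hργ]

end IwahoriMod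

theorem demazure_induced_module_current_sl2_general (S : IwahoriMod)
    [FiniteDimensional ℂ S.carrier] :
    ∃ M : Sl2tMod, FiniteDimensional ℂ M.carrier ∧
      ∃ η : S.carrier →ₗ[ℂ] M.carrier, S.IsEquivariant η ∧
        ∀ N : Sl2tMod, FiniteDimensional ℂ N.carrier →
          ∀ g : S.carrier →ₗ[ℂ] N.carrier, S.IsEquivariant g →
            ∃! φ : M.carrier →ₗ[ℂ] N.carrier, Sl2tMod.IsHom φ ∧ φ ∘ₗ η = g := by
  obtain ⟨M, η, hM, hη, hgen, hmax⟩ := S.exists_isGeneratedBy_forall_finrank_le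
  refine ⟨M, hM, η, hη, fun N _ g hg => ?_⟩
  obtain ⟨φ, hφ, hφη⟩ := hη.exists_isHom_comp_eq hgen hmax hg
  exact ⟨φ, ⟨hφ, hφη⟩, fun ψ ⟨hψ, hψη⟩ => hgen.hom_ext hψ hφ (hψη.trans hφη.symm)⟩

/-- Let `𝔲 ⊂ sl₂[t]` be the subalgebra spanned by `tⁱ⊗e`, `tⁱ⊗h` (`i ≥ 0`)
and `tʲ⊗f` (`j ≥ 1`), and let `S` be a finite-dimensional `𝔲`-module (given by operators
`ES i`, `HS i` (`i ≥ 0`) and `FS j` (`j ≥ 1`) satisfying the commutation relations of `𝔲`)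
on which `1⊗h` acts diagonalizably.  Then the maximal finite-dimensional quotient of the
induced `sl₂[t]`-module exists: there are a finite-dimensional `sl₂[t]`-module `M` and a
`𝔲`-equivariant map `η : S → M`, universal among `𝔲`-equivariant maps from `S` to
finite-dimensional `sl₂[t]`-modules. -/
theorem demazure_induced_module_current_sl2
    (S : Type) [AddCommGroup S] [Module ℂ S] [FiniteDimensional ℂ S]
    (ES HS FS : ℕ → Module.End ℂ S)
    (rel_he : ∀ i j, HS i * ES j - ES j * HS i = (2 : ℂ) • ES (i + j))
    (rel_hf : ∀ i j, 1 ≤ j → HS i * FS j - FS j * HS i = (-2 : ℂ) • FS (i + j))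
    (rel_ef : ∀ i j, 1 ≤ j → ES i * FS j - FS j * ES i = HS (i + j))
    (rel_hh : ∀ i j, HS i * HS j = HS j * HS i)
    (rel_ee : ∀ i j, ES i * ES j = ES j * ES i)
    (rel_ff : ∀ i j, 1 ≤ i → 1 ≤ j → FS i * FS j = FS j * FS i)
    (hdiagonalizable : (⨆ μ : ℂ, Module.End.eigenspace (HS 0) μ) = ⊤) :
    ∃ M : Sl2tMod, FiniteDimensional ℂ M.carrier ∧
      ∃ η : S →ₗ[ℂ] M.carrier,
        (∀ (i : ℕ) (s : S), η (ES i s) = M.E i (η s)) ∧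
        (∀ (i : ℕ) (s : S), η (HS i s) = M.H i (η s)) ∧
        (∀ (j : ℕ), 1 ≤ j → ∀ s : S, η (FS j s) = M.F j (η s)) ∧
        (∀ N : Sl2tMod, FiniteDimensional ℂ N.carrier →
          ∀ g : S →ₗ[ℂ] N.carrier,
            (∀ (i : ℕ) (s : S), g (ES i s) = N.E i (g s)) →
            (∀ (i : ℕ) (s : S), g (HS i s) = N.H i (g s)) →
            (∀ (j : ℕ), 1 ≤ j → ∀ s : S, g (FS j s) = N.F j (g s)) →
            ∃! φ : M.carrier →ₗ[ℂ] N.carrier,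
              ((∀ k, φ ∘ₗ M.E k = N.E k ∘ₗ φ) ∧
               (∀ k, φ ∘ₗ M.H k = N.H k ∘ₗ φ) ∧
               (∀ k, φ ∘ₗ M.F k = N.F k ∘ₗ φ)) ∧
              φ ∘ₗ η = g) := by
  obtain ⟨M, hM, η, ⟨hηE, hηH, hηF⟩, huniv⟩ := demazure_induced_module_current_sl2_general
    ⟨S, ES, HS, FS, rel_he, rel_hf, rel_ef, rel_hh, rel_ee, rel_ff⟩
  exact ⟨M, hM, η, hηE, hηH, hηF, fun N hN g hE hH hF => huniv N hN g ⟨hE, hH, hF⟩⟩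
end

section
/- Let 𝔞 be a Lie algebra over ℂ, (π₁,v₁),…,(πₙ,vₙ) cyclic 𝔞-modules, and Z = (z₁,…,zₙ) a tuple of pairwise distinct complex numbers. For any c ∈ ℂ with c ≠ 0 and any z ∈ ℂ, let cZ+z = (cz₁+z,…,czₙ+z). Then Fⁱ_{cZ+z} = Fⁱ_Z as subspaces of π₁⊗⋯⊗πₙ, for every i ≥ 0: the filtration of the filtered tensor product is invariant under simultaneous affine reparametrization of the points. -/
/-!
Since `(cz + w)^k` is a polynomial of degree at most `k` in `z`, the element `t^k ⊗ x` acts at the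
points `cZ + w` as a polynomial of degree at most `k` in `t`, tensored with `x`, acts at the points
`Z`. Hence `Fⁱ_{cZ+w} ≤ Fⁱ_Z`, and the inverse affine map gives the other inclusion.
-/

open scoped TensorProduct
open PiTensorProduct

namespace Fusion

open Polynomial

variable {L ι : Type} [Fintype ι] [DecidableEq ι]
variable (π : ι → Type) [∀ i, AddCommGroup (π i)] [∀ i, Module ℂ (π i)]
variable (ρ : ∀ i, L → Module.End ℂ (π i)) (v : ∀ i, π i) (z : ι → ℂ)

lemma polyAct_eq_sum_monAct (p : ℂ[X]) (x : L) :
    polyAct π ρ z p x = p.sum fun m a => a • monAct π ρ z m x := by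
  simp only [polyAct, monAct, eval_eq_sum, Polynomial.sum, Finset.sum_smul, Finset.smul_sum,
    mul_smul]
  exact Finset.sum_comm

lemma polyAct_mem_F (p : ℂ[X]) (x : L) {i : ℕ} {u : ⨂[ℂ] j, π j} (hu : u ∈ F π ρ v z i) :
    polyAct π ρ z p x u ∈ F π ρ v z (i + p.natDegree) := by
  rw [polyAct_eq_sum_monAct, Polynomial.sum, LinearMap.sum_apply]
  refine Submodule.sum_mem _ fun m hm => Submodule.smul_mem _ _ ?_
  have hmp : m ≤ p.natDegree := le_natDegree_of_mem_supp m hm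
  exact F_mono π ρ v z (Nat.add_le_add_left hmp i) (monAct_mem_F π ρ v m x hu)

lemma monAct_eval_eq_polyAct_pow (p : ℂ[X]) (k : ℕ) (x : L) :
    monAct π ρ (fun j => p.eval (z j)) k x = polyAct π ρ z (p ^ k) x := by
  simp only [monAct, polyAct, eval_pow]

variable {π ρ v z} in
lemma IsWord.mem_F_natDegree_mul {p : ℂ[X]} {u : ⨂[ℂ] j, π j} {d : ℕ}
    (hu : IsWord π ρ v (fun j => p.eval (z j)) u d) : u ∈ F π ρ v z (p.natDegree * d) := by
  induction hu with
  | base => exact Submodule.subset_span ⟨0, Nat.zero_le _, .base⟩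
  | @step x k u d _ ih =>
    have hdeg : p.natDegree * d + (p ^ k).natDegree = p.natDegree * (d + k) := by
      rw [natDegree_pow, mul_add, mul_comm k]
    rw [monAct_eval_eq_polyAct_pow, ← hdeg]
    exact polyAct_mem_F π ρ v z (p ^ k) x ih

theorem F_eval_le_F_natDegree_mul (p : ℂ[X]) (i : ℕ) :
    F π ρ v (fun j => p.eval (z j)) i ≤ F π ρ v z (p.natDegree * i) :=
  Submodule.span_le.2 fun _ ⟨_, hd, hu⟩ =>
    F_mono π ρ v z (Nat.mul_le_mul_left _ hd) hu.mem_F_natDegree_mul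

theorem F_affine_le (c w : ℂ) (i : ℕ) :
    F π ρ v (fun j => c * z j + w) i ≤ F π ρ v z i := by
  have hdeg : (C c * X + C w).natDegree * i ≤ i :=
    (Nat.mul_le_mul_right i natDegree_linear_le).trans_eq (one_mul i)
  simpa only [eval_add, eval_mul, eval_C, eval_X] using
    (F_eval_le_F_natDegree_mul π ρ v z (C c * X + C w) i).trans (F_mono π ρ v z hdeg)

end Fusion

open Fusion in
theorem filtration_affine_invariance_general
    {L ι : Type} [Fintype ι] [DecidableEq ι]
    (π : ι → Type) [∀ i, AddCommGroup (π i)] [∀ i, Module ℂ (π i)]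
    (ρ : ∀ i, L → Module.End ℂ (π i)) (v : ∀ i, π i) (z : ι → ℂ)
    {c : ℂ} (hc : c ≠ 0) (w : ℂ) (i : ℕ) :
    F π ρ v (fun j => c * z j + w) i = F π ρ v z i := by
  have hinv : (fun j => c⁻¹ * (c * z j + w) + -(c⁻¹ * w)) = z := by
    funext j
    rw [mul_add, inv_mul_cancel_left₀ hc, add_neg_cancel_right]
  refine (F_affine_le π ρ v z c w i).antisymm ?_
  simpa only [hinv] using F_affine_le π ρ v (fun j => c * z j + w) c⁻¹ (-(c⁻¹ * w)) i

open Fusion in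
/-- The filtration of the filtered tensor product is invariant under a
simultaneous affine reparametrization `Z ↦ cZ + w` (`c ≠ 0`) of the points. -/
theorem filtration_affine_invariance
    {L : Type} [LieRing L] [LieAlgebra ℂ L]
    (n : ℕ) (π : Fin n → Type) [∀ i, AddCommGroup (π i)] [∀ i, Module ℂ (π i)]
    [∀ i, LieRingModule L (π i)] [∀ i, LieModule ℂ L (π i)]
    (v : ∀ i, π i)
    (hcyc : ∀ i, ∀ N : LieSubmodule ℂ L (π i), v i ∈ N → N = ⊤)
    (z : Fin n → ℂ) (hz : Function.Injective z)
    (c : ℂ) (hc : c ≠ 0) (w : ℂ) (i : ℕ) :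
    F π (fun i x => LieModule.toEnd ℂ L (π i) x) v (fun j => c * z j + w) i =
      F π (fun i x => LieModule.toEnd ℂ L (π i) x) v z i :=
  filtration_affine_invariance_general π _ v z hc w i
end
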